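/- arXiv:1911.01494 — 7 statements merged into one kernel-verified Lean document; each statement's English description precedes it below -/
import Mathlib

section
/- Let V be a complex inner product space, U : V → V a unitary (linear isometric equivalence), u, v ∈ V vectors, and a, b ∈ ℂ with |a| = |b| = 1 and a ≠ b. If ‖U u − a u‖ ≤ ε₁ and ‖U v − b v‖ ≤ ε₂, then |⟨u, v⟩| ≤ max(‖u‖, ‖v‖)·(ε₁ + ε₂)/|1 − a⁻¹b| + ε₁ε₂/|1 − a⁻¹b|. -/
section ApproximateEigenvectors

open scoped ComplexConjugate

variable {𝕜 E : Type*} [RCLike 𝕜] [SeminormedAddCommGroup E] [InnerProductSpace 𝕜 E]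

/-- Start from `⟪u, v⟫ = ⟪U u, U v⟫`, replace `U u` by `a • u`, then `U v` by `b • v`. -/
theorem one_sub_conj_mul_mul_inner (U : E →ₗᵢ[𝕜] E) (u v : E) (a b : 𝕜) :
    (1 - conj a * b) * inner 𝕜 u v =
      inner 𝕜 (U u - a • u) (U v) + inner 𝕜 (a • u) (U v - b • v) := by
  rw [inner_sub_left, inner_sub_right, U.inner_map_map, inner_smul_left, inner_smul_left,
    inner_smul_right]
  ring

theorem norm_one_sub_conj_mul_mul_norm_inner_le (U : E →ₗᵢ[𝕜] E) (u v : E) (a b : 𝕜) :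
    ‖1 - conj a * b‖ * ‖inner 𝕜 u v‖ ≤
      ‖U u - a • u‖ * ‖v‖ + ‖a‖ * ‖u‖ * ‖U v - b • v‖ :=
  calc
    ‖1 - conj a * b‖ * ‖inner 𝕜 u v‖
      = ‖inner 𝕜 (U u - a • u) (U v) + inner 𝕜 (a • u) (U v - b • v)‖ := by
        rw [← norm_mul, one_sub_conj_mul_mul_inner U]
    _ ≤ ‖inner 𝕜 (U u - a • u) (U v)‖ + ‖inner 𝕜 (a • u) (U v - b • v)‖ := norm_add_le _ _
    _ ≤ ‖U u - a • u‖ * ‖U v‖ + ‖a • u‖ * ‖U v - b • v‖ := by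
        gcongr <;> exact norm_inner_le_norm _ _
    _ = ‖U u - a • u‖ * ‖v‖ + ‖a‖ * ‖u‖ * ‖U v - b • v‖ := by
        rw [U.norm_map, norm_smul]

theorem stmt_0_general (U : E →ₗᵢ[𝕜] E) (u v : E) {a b : 𝕜} (ha : ‖a‖ = 1) (hab : a ≠ b)
    {ε₁ ε₂ : ℝ} (hu : ‖U u - a • u‖ ≤ ε₁) (hv : ‖U v - b • v‖ ≤ ε₂) :
    ‖inner 𝕜 u v‖ ≤ max ‖u‖ ‖v‖ * (ε₁ + ε₂) / ‖1 - a⁻¹ * b‖ := by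
  have ha₀ : a ≠ 0 := norm_ne_zero_iff.mp (ha ▸ one_ne_zero)
  have gap_pos : 0 < ‖1 - a⁻¹ * b‖ :=
    norm_pos_iff.mpr <| sub_ne_zero.mpr fun h ↦ hab ((inv_mul_eq_one₀ ha₀).mp h.symm)
  rw [le_div_iff₀' gap_pos]
  calc
    ‖1 - a⁻¹ * b‖ * ‖inner 𝕜 u v‖
      ≤ ‖U u - a • u‖ * ‖v‖ + ‖u‖ * ‖U v - b • v‖ := by
        simpa only [RCLike.inv_eq_conj ha, ha, one_mul] using
          norm_one_sub_conj_mul_mul_norm_inner_le U u v a b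
    _ ≤ ε₁ * max ‖u‖ ‖v‖ + max ‖u‖ ‖v‖ * ε₂ := by
        gcongr
        · exact (norm_nonneg _).trans hu
        · exact le_max_right _ _
        · exact le_max_left _ _
    _ = max ‖u‖ ‖v‖ * (ε₁ + ε₂) := by ring

end ApproximateEigenvectors

/-- If `U` is a unitary of a complex inner product space, `a b` are
unit-modulus complex numbers with `a ≠ b`, and `u`, `v` are approximate eigenvectors of `U`
with eigenvalues `a` and `b` (up to `ε₁`, `ε₂`), then `|⟪u, v⟫|` is small. -/
theorem stmt_0 {V : Type*} [NormedAddCommGroup V] [InnerProductSpace ℂ V]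
    (U : V ≃ₗᵢ[ℂ] V) (u v : V) (a b : ℂ)
    (ha : ‖a‖ = 1) (hb : ‖b‖ = 1) (hab : a ≠ b)
    (ε₁ ε₂ : ℝ) (hε₁ : 0 ≤ ε₁) (hε₂ : 0 ≤ ε₂)
    (hu : ‖U u - a • u‖ ≤ ε₁) (hv : ‖U v - b • v‖ ≤ ε₂) :
    ‖(inner ℂ u v : ℂ)‖ ≤
      max ‖u‖ ‖v‖ * (ε₁ + ε₂) / ‖1 - a⁻¹ * b‖ + ε₁ * ε₂ / ‖1 - a⁻¹ * b‖ :=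
  le_add_of_le_of_nonneg (stmt_0_general U.toLinearIsometry u v ha hab hu hv) (by positivity)
end

section
/- (Substitution Lemma.) Let H_A and H_B be finite-dimensional complex Hilbert spaces and ψ ∈ H_A ⊗ H_B (Hilbert tensor product). Suppose V, V₁, …, V_k, M₁, …, M_n are unitaries on H_A and N₁, …, N_n are unitaries on H_B such that ‖(M_i ⊗ 1)ψ − (1 ⊗ N_i)ψ‖ ≤ ε₁ for every 1 ≤ i ≤ n, and ‖(V ⊗ 1)ψ − ((V₁⋯V_k) ⊗ 1)ψ‖ ≤ ε₂. Then ‖((V·M₁⋯M_n) ⊗ 1)ψ − ((V₁⋯V_k·M₁⋯M_n) ⊗ 1)ψ‖ ≤ 2nε₁ + ε₂. -/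
open Matrix Kronecker

/-- The action of a matrix on a vector of the corresponding Euclidean (Hilbert) space. -/
noncomputable def mApply {ι κ : Type*} [Fintype ι] (A : Matrix κ ι ℂ) (v : EuclideanSpace ℂ ι) :
    EuclideanSpace ℂ κ :=
  (WithLp.equiv 2 (κ → ℂ)).symm (A.mulVec (WithLp.equiv 2 (ι → ℂ) v))

/-!
If `b` commutes with `v` and `w`, then `v a ψ ≈ v b ψ = b v ψ ≈ b w ψ = w b ψ ≈ w a ψ`: appending a
factor `a` with `a ψ ≈ b ψ` to both `v` and `w` costs two swaps. This uses only that `v`, `w` and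
`b` do not increase distances. On `H_A ⊗ H_B` the operators `1 ⊗ N i` commute with every `X ⊗ 1`.
-/

section NonexpansiveAction

variable {S X : Type*} [Monoid S] [PseudoMetricSpace X] [MulAction S X] {v w : S}

theorem dist_mul_smul_le {a b : S} (hv : LipschitzWith 1 (v • · : X → X))
    (hw : LipschitzWith 1 (w • · : X → X)) (hb : LipschitzWith 1 (b • · : X → X))
    (hvb : Commute v b) (hwb : Commute w b) (x : X) :
    dist ((v * a) • x) ((w * a) • x) ≤ dist (v • x) (w • x) + 2 * dist (a • x) (b • x) := by
  have swap {u : S} (hu : LipschitzWith 1 (u • · : X → X)) (hub : Commute u b) :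
      dist ((u * a) • x) (b • u • x) ≤ dist (a • x) (b • x) := by
    rw [← mul_smul b, ← hub.eq, mul_smul, mul_smul]
    exact hu.dist_le_mul_of_le le_rfl |>.trans_eq (one_mul _)
  have swap_v := swap hv hvb
  have swap_w := swap hw hwb
  have middle : dist (b • v • x) (b • w • x) ≤ dist (v • x) (w • x) :=
    hb.dist_le_mul_of_le le_rfl |>.trans_eq (one_mul _)
  calc dist ((v * a) • x) ((w * a) • x)
    _ ≤ dist ((v * a) • x) (b • v • x) + dist (b • v • x) (b • w • x)
          + dist (b • w • x) ((w * a) • x) := dist_triangle4 _ _ _ _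
    _ ≤ dist (v • x) (w • x) + 2 * dist (a • x) (b • x) := by
      rw [dist_comm (b • w • x)]
      linarith

theorem dist_mul_prod_ofFn_smul_le {n : ℕ} {a b : Fin n → S}
    (hv : LipschitzWith 1 (v • · : X → X)) (hw : LipschitzWith 1 (w • · : X → X))
    (ha : ∀ i, LipschitzWith 1 (a i • · : X → X)) (hb : ∀ i, LipschitzWith 1 (b i • · : X → X))
    (hvb : ∀ i, Commute v (b i)) (hwb : ∀ i, Commute w (b i))
    (hab : ∀ i j, Commute (a i) (b j)) (x : X) :
    dist ((v * (List.ofFn a).prod) • x) ((w * (List.ofFn a).prod) • x) ≤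
      dist (v • x) (w • x) + 2 * ∑ i, dist (a i • x) (b i • x) := by
  induction n generalizing v w with
  | zero => simp
  | succ n ih =>
    have lipschitz_mul {u : S} (hu : LipschitzWith 1 (u • · : X → X)) :
        LipschitzWith 1 ((u * a 0) • · : X → X) := by
      simpa only [mul_smul, mul_one, Function.comp_def] using hu.comp (ha 0)
    have tail := ih (lipschitz_mul hv) (lipschitz_mul hw) (fun i ↦ ha i.succ) (fun i ↦ hb i.succ)
      (fun i ↦ (hvb _).mul_left (hab _ _)) (fun i ↦ (hwb _).mul_left (hab _ _))
      (fun i j ↦ hab i.succ j.succ)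
    have first := dist_mul_smul_le (a := a 0) hv hw (hb 0) (hvb 0) (hwb 0) x
    rw [List.ofFn_succ, List.prod_cons, ← mul_assoc, ← mul_assoc, Fin.sum_univ_succ]
    linarith

end NonexpansiveAction

section KroneckerEmbedding

variable (R m n : Type*) [CommSemiring R] [StarRing R] [Fintype m] [DecidableEq m]
  [Fintype n] [DecidableEq n]

/-- The embedding `A ↦ A ⊗ 1` of the operators on the first tensor factor, as a star algebra
homomorphism. -/
def kroneckerInl : Matrix m m R →⋆ₐ[R] Matrix (m × n) (m × n) R where
  toFun A := A ⊗ₖ 1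
  map_one' := one_kronecker_one
  map_mul' A B := by rw [← mul_kronecker_mul, mul_one]
  map_zero' := zero_kronecker _
  map_add' A B := add_kronecker A B _
  commutes' r := by simp only [Algebra.algebraMap_eq_smul_one, smul_kronecker, one_kronecker_one]
  map_star' A := by simp only [star_eq_conjTranspose, conjTranspose_kronecker, conjTranspose_one]

/-- The embedding `B ↦ 1 ⊗ B` of the operators on the second tensor factor, as a star algebra
homomorphism. -/
def kroneckerInr : Matrix n n R →⋆ₐ[R] Matrix (m × n) (m × n) R where
  toFun B := 1 ⊗ₖ B
  map_one' := one_kronecker_one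
  map_mul' A B := by rw [← mul_kronecker_mul, mul_one]
  map_zero' := kronecker_zero _
  map_add' A B := kronecker_add _ A B
  commutes' r := by simp only [Algebra.algebraMap_eq_smul_one, kronecker_smul, one_kronecker_one]
  map_star' B := by simp only [star_eq_conjTranspose, conjTranspose_kronecker, conjTranspose_one]

variable {R m n}

theorem commute_kroneckerInl_kroneckerInr (A : Matrix m m R) (B : Matrix n n R) :
    Commute (kroneckerInl R m n A) (kroneckerInr R m n B) := by
  change (A ⊗ₖ 1) * (1 ⊗ₖ B) = (1 ⊗ₖ B) * (A ⊗ₖ 1)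
  simp only [← mul_kronecker_mul, mul_one, one_mul]

end KroneckerEmbedding

/-- The action of a matrix ring on Euclidean space by `mApply`. It is not an instance, so that no
global scalar multiplication by matrices is introduced. -/
noncomputable abbrev mApplyMulAction (ι : Type*) [Fintype ι] [DecidableEq ι] :
    MulAction (Matrix ι ι ℂ) (EuclideanSpace ℂ ι) where
  smul := mApply
  one_smul v := congrArg (WithLp.toLp 2) (one_mulVec v.ofLp)
  mul_smul A B v := congrArg (WithLp.toLp 2) (mulVec_mulVec v.ofLp A B).symm

section Contractions

open scoped Matrix.Norms.L2Operator

theorem l2_opNorm_le_one_of_mem_unitaryGroup {𝕜 ι : Type*} [RCLike 𝕜] [Fintype ι] [DecidableEq ι]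
    {U : Matrix ι ι 𝕜} (hU : U ∈ unitaryGroup ι 𝕜) : ‖U‖ ≤ 1 := by
  nontriviality Matrix ι ι 𝕜
  exact (CStarRing.norm_of_mem_unitary hU).le

variable {ι κ : Type*} [Fintype ι] [DecidableEq ι] [Fintype κ] [DecidableEq κ]

theorem lipschitzWith_one_mApply {A : Matrix ι ι ℂ} (hA : ‖A‖ ≤ 1) : LipschitzWith 1 (mApply A) :=
  (toEuclideanCLM (n := ι) (𝕜 := ℂ) A).lipschitz.weaken hA

theorem norm_mApply_mul_prod_ofFn_sub_le {n : ℕ} {v w : Matrix ι ι ℂ} {a b : Fin n → Matrix ι ι ℂ}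
    (hv : ‖v‖ ≤ 1) (hw : ‖w‖ ≤ 1) (ha : ∀ i, ‖a i‖ ≤ 1) (hb : ∀ i, ‖b i‖ ≤ 1)
    (hvb : ∀ i, Commute v (b i)) (hwb : ∀ i, Commute w (b i)) (hab : ∀ i j, Commute (a i) (b j))
    (ψ : EuclideanSpace ℂ ι) :
    ‖mApply (v * (List.ofFn a).prod) ψ - mApply (w * (List.ofFn a).prod) ψ‖ ≤
      ‖mApply v ψ - mApply w ψ‖ + 2 * ∑ i, ‖mApply (a i) ψ - mApply (b i) ψ‖ := by
  simp only [← dist_eq_norm]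
  let _ := mApplyMulAction ι
  exact dist_mul_prod_ofFn_smul_le (v := v) (w := w) (a := a) (b := b)
    (lipschitzWith_one_mApply hv) (lipschitzWith_one_mApply hw)
    (fun i ↦ lipschitzWith_one_mApply (ha i)) (fun i ↦ lipschitzWith_one_mApply (hb i))
    hvb hwb hab ψ

theorem stmt_1_general (ψ : EuclideanSpace ℂ (ι × κ)) {n : ℕ} {V W : Matrix ι ι ℂ}
    {M : Fin n → Matrix ι ι ℂ} {N : Fin n → Matrix κ κ ℂ}
    (hV : ‖V‖ ≤ 1) (hW : ‖W‖ ≤ 1) (hM : ∀ i, ‖M i‖ ≤ 1) (hN : ∀ i, ‖N i‖ ≤ 1) {ε₁ ε₂ : ℝ}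
    (hMN : ∀ i, ‖mApply (M i ⊗ₖ (1 : Matrix κ κ ℂ)) ψ -
      mApply ((1 : Matrix ι ι ℂ) ⊗ₖ N i) ψ‖ ≤ ε₁)
    (hVW : ‖mApply (V ⊗ₖ (1 : Matrix κ κ ℂ)) ψ - mApply (W ⊗ₖ (1 : Matrix κ κ ℂ)) ψ‖ ≤ ε₂) :
    ‖mApply ((V * (List.ofFn M).prod) ⊗ₖ (1 : Matrix κ κ ℂ)) ψ -
      mApply ((W * (List.ofFn M).prod) ⊗ₖ (1 : Matrix κ κ ℂ)) ψ‖ ≤ 2 * n * ε₁ + ε₂ := by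
  let L := kroneckerInl ℂ ι κ
  let R := kroneckerInr ℂ ι κ
  have norm_L_le {A : Matrix ι ι ℂ} (hA : ‖A‖ ≤ 1) : ‖L A‖ ≤ 1 :=
    (NonUnitalStarAlgHom.norm_apply_le L A).trans hA
  have norm_R_le {B : Matrix κ κ ℂ} (hB : ‖B‖ ≤ 1) : ‖R B‖ ≤ 1 :=
    (NonUnitalStarAlgHom.norm_apply_le R B).trans hB
  have L_mul_prod (U : Matrix ι ι ℂ) :
      L (U * (List.ofFn M).prod) = L U * (List.ofFn fun i ↦ L (M i)).prod := by
    rw [map_mul, map_list_prod, List.map_ofFn, Function.comp_def]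
  have sum_le : ∑ i, ‖mApply (L (M i)) ψ - mApply (R (N i)) ψ‖ ≤ n * ε₁ := by
    calc ∑ i, ‖mApply (L (M i)) ψ - mApply (R (N i)) ψ‖
      _ ≤ ∑ _ : Fin n, ε₁ := Finset.sum_le_sum fun i _ ↦ hMN i
      _ = n * ε₁ := by simp
  calc ‖mApply (L (V * (List.ofFn M).prod)) ψ - mApply (L (W * (List.ofFn M).prod)) ψ‖
    _ ≤ ‖mApply (L V) ψ - mApply (L W) ψ‖ +
          2 * ∑ i, ‖mApply (L (M i)) ψ - mApply (R (N i)) ψ‖ := by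
      rw [L_mul_prod, L_mul_prod]
      exact norm_mApply_mul_prod_ofFn_sub_le (norm_L_le hV) (norm_L_le hW)
        (fun i ↦ norm_L_le (hM i)) (fun i ↦ norm_R_le (hN i))
        (fun i ↦ commute_kroneckerInl_kroneckerInr V (N i))
        (fun i ↦ commute_kroneckerInl_kroneckerInr W (N i))
        (fun i j ↦ commute_kroneckerInl_kroneckerInr (M i) (N j)) ψ
    _ ≤ ε₂ + 2 * (n * ε₁) := by gcongr; exact hVW
    _ = 2 * n * ε₁ + ε₂ := by ring

end Contractions

/-- Substitution Lemma. Here `H_A = ℂ^{nA}`, `H_B = ℂ^{nB}`,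
`H_A ⊗ H_B` is realized as `EuclideanSpace ℂ (Fin nA × Fin nB)`, and `A ⊗ 1`, `1 ⊗ B`
are realized via Kronecker products. -/
theorem stmt_1 (nA nB : ℕ) (ψ : EuclideanSpace ℂ (Fin nA × Fin nB))
    (k n : ℕ) (V : Matrix (Fin nA) (Fin nA) ℂ)
    (Vs : Fin k → Matrix (Fin nA) (Fin nA) ℂ)
    (M : Fin n → Matrix (Fin nA) (Fin nA) ℂ)
    (N : Fin n → Matrix (Fin nB) (Fin nB) ℂ)
    (hV : V ∈ Matrix.unitaryGroup (Fin nA) ℂ)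
    (hVs : ∀ i, Vs i ∈ Matrix.unitaryGroup (Fin nA) ℂ)
    (hM : ∀ i, M i ∈ Matrix.unitaryGroup (Fin nA) ℂ)
    (hN : ∀ i, N i ∈ Matrix.unitaryGroup (Fin nB) ℂ)
    (ε₁ ε₂ : ℝ) (hε₁ : 0 ≤ ε₁) (hε₂ : 0 ≤ ε₂)
    (h1 : ∀ i, ‖mApply ((M i) ⊗ₖ (1 : Matrix (Fin nB) (Fin nB) ℂ)) ψ -
        mApply ((1 : Matrix (Fin nA) (Fin nA) ℂ) ⊗ₖ (N i)) ψ‖ ≤ ε₁)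
    (h2 : ‖mApply (V ⊗ₖ (1 : Matrix (Fin nB) (Fin nB) ℂ)) ψ -
        mApply ((List.ofFn Vs).prod ⊗ₖ (1 : Matrix (Fin nB) (Fin nB) ℂ)) ψ‖ ≤ ε₂) :
    ‖mApply ((V * (List.ofFn M).prod) ⊗ₖ (1 : Matrix (Fin nB) (Fin nB) ℂ)) ψ -
        mApply (((List.ofFn Vs).prod * (List.ofFn M).prod) ⊗ₖ
          (1 : Matrix (Fin nB) (Fin nB) ℂ)) ψ‖ ≤ 2 * n * ε₁ + ε₂ := by
  have hW : (List.ofFn Vs).prod ∈ unitaryGroup (Fin nA) ℂ :=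
    list_prod_mem (List.forall_mem_ofFn_iff.2 hVs)
  exact stmt_1_general ψ (l2_opNorm_le_one_of_mem_unitaryGroup hV)
    (l2_opNorm_le_one_of_mem_unitaryGroup hW) (fun i ↦ l2_opNorm_le_one_of_mem_unitaryGroup (hM i))
    (fun i ↦ l2_opNorm_le_one_of_mem_unitaryGroup (hN i)) h1 h2
end

section
/- In the group 𝒫₀ the following hold: (u₁u₂)·o₂·(u₂u₁) = o₂, and for every natural number j ≥ 1, (u₁u₂)^j·(o₁o₂)·(u₂u₁)^j = (o₁o₂)^{r^j}. -/
/-- The generators `o₁, …, o_r, u₁, …, u₅` of the group `𝒫₀`. -/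
inductive P0Gen (r : ℕ) : Type
  | o : Fin r → P0Gen r
  | u : Fin 5 → P0Gen r

/-- The free-group letter `o_k` (`1 ≤ k ≤ r`; junk value `1` out of range). -/
def oW (r : ℕ) (k : ℕ) : FreeGroup (P0Gen r) :=
  if h : 1 ≤ k ∧ k ≤ r then FreeGroup.of (P0Gen.o ⟨k - 1, by omega⟩) else 1

/-- The free-group letter `u_k` (`1 ≤ k ≤ 5`; junk value `1` out of range). -/
def uW (r : ℕ) (k : ℕ) : FreeGroup (P0Gen r) :=
  if h : 1 ≤ k ∧ k ≤ 5 then FreeGroup.of (P0Gen.u ⟨k - 1, by omega⟩) else 1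

/-- The relations `s² = e` for every generator `s` of `𝒫₀`. -/
def P0RelsSq (r : ℕ) : Set (FreeGroup (P0Gen r)) :=
  Set.range fun g : P0Gen r => FreeGroup.of g * FreeGroup.of g

/-- The relations `u₃ = u₂o₁u₂`, `u₄ = u₂o₂u₂`, `u₅ = u₁u₃u₁`, `o₂ = u₁u₄u₁`,
`u₅ = o₁o_r o₁` of `𝒫₀`. -/
def P0RelsU (r : ℕ) : Set (FreeGroup (P0Gen r)) :=
  { uW r 2 * oW r 1 * uW r 2 * (uW r 3)⁻¹,
    uW r 2 * oW r 2 * uW r 2 * (uW r 4)⁻¹,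
    uW r 1 * uW r 3 * uW r 1 * (uW r 5)⁻¹,
    uW r 1 * uW r 4 * uW r 1 * (oW r 2)⁻¹,
    oW r 1 * oW r r * oW r 1 * (uW r 5)⁻¹ }

/-- The remaining conjugacy relations of `𝒫₀`: if `r` is even, `o_{1+2j} = o₁o_{2j}o₁` and
`o_{2+2j} = o₂o_{1+2j}o₂` for `j = 1, …, r/2 − 1`; if `r` is odd, `o₃ = o₂o₁o₂` together
with `o_{2+2j} = o₁o_{1+2j}o₁` and `o_{3+2j} = o₂o_{2+2j}o₂` for `j = 1, …, (r−3)/2`. -/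
def P0RelsO (r : ℕ) : Set (FreeGroup (P0Gen r)) :=
  if Even r then
    ⋃ j ∈ Finset.Icc 1 (r / 2 - 1),
      ({oW r 1 * oW r (2 * j) * oW r 1 * (oW r (1 + 2 * j))⁻¹,
        oW r 2 * oW r (1 + 2 * j) * oW r 2 * (oW r (2 + 2 * j))⁻¹} :
          Set (FreeGroup (P0Gen r)))
  else
    {oW r 2 * oW r 1 * oW r 2 * (oW r 3)⁻¹} ∪
    ⋃ j ∈ Finset.Icc 1 ((r - 3) / 2),
      ({oW r 1 * oW r (1 + 2 * j) * oW r 1 * (oW r (2 + 2 * j))⁻¹,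
        oW r 2 * oW r (2 + 2 * j) * oW r 2 * (oW r (3 + 2 * j))⁻¹} :
          Set (FreeGroup (P0Gen r)))

/-- All defining relations of `𝒫₀`. -/
def P0Rels (r : ℕ) : Set (FreeGroup (P0Gen r)) := P0RelsSq r ∪ P0RelsU r ∪ P0RelsO r

/-- The group `𝒫₀`, presented by the above generators and relations. -/
abbrev P0 (r : ℕ) : Type := PresentedGroup (P0Rels r)

/-!
Put `t = u₁u₂` and `s = o₁o₂`. Since `u₁` and `u₂` are involutions, the relations among the `uᵢ`
say that conjugation by `t` fixes `o₂` and sends `o₁` to `o₁o_r o₁`. The relations among the `oᵢ`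
make `o₁o_{k+2} = s · o₁o_k · s` for every `k` of the parity of `r`, so that `o₁o_r = s^{r-1}`.
Conjugation by `t` therefore sends `s` to `o₁o_r · o₁o₂ = s^r`, and iterating it raises the
exponent to `r^j`.
-/

section Monoid

variable {M : Type*} [Monoid M]

theorem semiconjBy_mul_mul_of_mul_self_eq_one {a : M} (ha : a * a = 1) (x : M) :
    SemiconjBy a x (a * x * a) := by
  rw [SemiconjBy, mul_assoc (a * x), ha, mul_one]

theorem semiconjBy_pow_left_of_pow {a x : M} {n : ℕ} (h : SemiconjBy a x (x ^ n)) (j : ℕ) :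
    SemiconjBy (a ^ j) x (x ^ n ^ j) := by
  induction j with
  | zero => simp
  | succ j ih =>
    rw [pow_succ' a, pow_succ' n, pow_mul]
    exact (h.pow_right _).mul_left ih

end Monoid

namespace P0

/-- The element `o_k` of `𝒫₀`; like the letter `oW r k`, it is `1` unless `1 ≤ k ≤ r`. -/
def o (r k : ℕ) : P0 r := PresentedGroup.mk (P0Rels r) (oW r k)

/-- The element `u_k` of `𝒫₀`; like the letter `uW r k`, it is `1` unless `1 ≤ k ≤ 5`. -/
def u (r k : ℕ) : P0 r := PresentedGroup.mk (P0Rels r) (uW r k)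

theorem mk_of_mul_of {r : ℕ} (g : P0Gen r) :
    PresentedGroup.mk (P0Rels r) (FreeGroup.of g * FreeGroup.of g) = 1 :=
  PresentedGroup.one_of_mem (.inl (.inl ⟨g, rfl⟩))

theorem o_mul_self (r k : ℕ) : o r k * o r k = 1 := by
  rw [o, ← map_mul, oW]
  split_ifs
  · exact mk_of_mul_of _
  · simp

theorem u_mul_self (r k : ℕ) : u r k * u r k = 1 := by
  rw [u, ← map_mul, uW]
  split_ifs
  · exact mk_of_mul_of _
  · simp

theorem mk_eq_mk_of_mem_relsU {r : ℕ} {x y : FreeGroup (P0Gen r)} (h : x * y⁻¹ ∈ P0RelsU r) :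
    PresentedGroup.mk (P0Rels r) x = PresentedGroup.mk (P0Rels r) y :=
  PresentedGroup.mk_eq_mk_of_mul_inv_mem (.inl (.inr h))

theorem mk_eq_mk_of_mem_relsO {r : ℕ} {x y : FreeGroup (P0Gen r)} (h : x * y⁻¹ ∈ P0RelsO r) :
    PresentedGroup.mk (P0Rels r) x = PresentedGroup.mk (P0Rels r) y :=
  PresentedGroup.mk_eq_mk_of_mul_inv_mem (.inr h)

theorem u_one_conj_u_two_conj_o_one (r : ℕ) :
    u r 1 * (u r 2 * o r 1 * u r 2) * u r 1 = o r 1 * o r r * o r 1 := by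
  have h₃ : u r 2 * o r 1 * u r 2 = u r 3 := mk_eq_mk_of_mem_relsU (by simp [P0RelsU])
  have h₅ : u r 1 * u r 3 * u r 1 = u r 5 := mk_eq_mk_of_mem_relsU (by simp [P0RelsU])
  have hr : o r 1 * o r r * o r 1 = u r 5 := mk_eq_mk_of_mem_relsU (by simp [P0RelsU])
  rw [h₃, h₅, hr]

theorem u_one_conj_u_two_conj_o_two (r : ℕ) :
    u r 1 * (u r 2 * o r 2 * u r 2) * u r 1 = o r 2 := by
  have h₄ : u r 2 * o r 2 * u r 2 = u r 4 := mk_eq_mk_of_mem_relsU (by simp [P0RelsU])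
  have h₂ : u r 1 * u r 4 * u r 1 = o r 2 := mk_eq_mk_of_mem_relsU (by simp [P0RelsU])
  rw [h₄, h₂]

theorem o_two_mul_add_two {r j : ℕ} (hr : Even r) (hj : 1 ≤ j) (hjr : 2 * j + 2 ≤ r) :
    o r (2 * j + 2) = o r 2 * (o r 1 * o r (2 * j) * o r 1) * o r 2 := by
  have hmem : j ∈ Finset.Icc 1 (r / 2 - 1) := by
    rw [Finset.mem_Icc]
    lia
  have h₁ : o r 1 * o r (2 * j) * o r 1 = o r (1 + 2 * j) := mk_eq_mk_of_mem_relsO <| by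
    rw [P0RelsO, if_pos hr]
    exact Set.mem_biUnion hmem (.inl rfl)
  have h₂ : o r 2 * o r (1 + 2 * j) * o r 2 = o r (2 + 2 * j) := mk_eq_mk_of_mem_relsO <| by
    rw [P0RelsO, if_pos hr]
    exact Set.mem_biUnion hmem (.inr rfl)
  rw [h₁, h₂, add_comm]

theorem o_three {r : ℕ} (hr : ¬Even r) : o r 3 = o r 2 * o r 1 * o r 2 :=
  .symm <| mk_eq_mk_of_mem_relsO <| by
    rw [P0RelsO, if_neg hr]
    exact .inl rfl

theorem o_two_mul_add_three {r j : ℕ} (hr : ¬Even r) (hj : 1 ≤ j) (hjr : 2 * j + 3 ≤ r) :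
    o r (2 * j + 3) = o r 2 * (o r 1 * o r (2 * j + 1) * o r 1) * o r 2 := by
  have hmem : j ∈ Finset.Icc 1 ((r - 3) / 2) := by
    rw [Finset.mem_Icc]
    lia
  have h₁ : o r 1 * o r (1 + 2 * j) * o r 1 = o r (2 + 2 * j) := mk_eq_mk_of_mem_relsO <| by
    rw [P0RelsO, if_neg hr]
    exact .inr (Set.mem_biUnion hmem (.inl rfl))
  have h₂ : o r 2 * o r (2 + 2 * j) * o r 2 = o r (3 + 2 * j) := mk_eq_mk_of_mem_relsO <| by
    rw [P0RelsO, if_neg hr]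
    exact .inr (Set.mem_biUnion hmem (.inr rfl))
  rw [add_comm _ 1, h₁, h₂, add_comm]

theorem o_add_two {r k : ℕ} (hk : 1 ≤ k) (hkr : k + 2 ≤ r) (heven : Even (r + k)) :
    o r (k + 2) = o r 2 * (o r 1 * o r k * o r 1) * o r 2 := by
  by_cases hr : Even r
  · obtain ⟨j, rfl⟩ := ((Nat.even_add.mp heven).mp hr).two_dvd
    exact o_two_mul_add_two hr (by lia) hkr
  · obtain ⟨j, rfl⟩ := Nat.not_even_iff_odd.mp (mt (Nat.even_add.mp heven).mpr hr)
    rcases Nat.eq_zero_or_pos j with rfl | hj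
    · -- The relation `o₃ = o₂o₁o₂` is the case `k = 1`, because `o₁o₁o₁ = o₁`.
      rw [mul_zero, zero_add, o_mul_self, one_mul, o_three hr]
    · exact o_two_mul_add_three hr hj hkr

theorem o_one_mul_o_succ {r k : ℕ} (hkr : k + 1 ≤ r) (heven : Even (r + (k + 1))) :
    o r 1 * o r (k + 1) = (o r 1 * o r 2) ^ k := by
  induction k using Nat.twoStepInduction with
  | zero => rw [zero_add, o_mul_self, pow_zero]
  | one => rw [pow_one]
  | more k ih _ =>
    have heven' : Even (r + (k + 1)) := by grind
    calc o r 1 * o r (k + 1 + 2)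
        = o r 1 * o r 2 * (o r 1 * o r (k + 1)) * (o r 1 * o r 2) := by
          rw [o_add_two (by lia) hkr heven']
          simp only [mul_assoc]
      _ = (o r 1 * o r 2) ^ (k + 2) := by
          rw [ih (by lia) heven', ← pow_succ', ← pow_succ]

theorem semiconjBy_u_one_mul_u_two (r : ℕ) (x : P0 r) :
    SemiconjBy (u r 1 * u r 2) x (u r 1 * (u r 2 * x * u r 2) * u r 1) :=
  (semiconjBy_mul_mul_of_mul_self_eq_one (u_mul_self r 1) _).mul_left
    (semiconjBy_mul_mul_of_mul_self_eq_one (u_mul_self r 2) x)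

theorem semiconjBy_u_one_mul_u_two_o_one (r : ℕ) :
    SemiconjBy (u r 1 * u r 2) (o r 1) (o r 1 * o r r * o r 1) :=
  u_one_conj_u_two_conj_o_one r ▸ semiconjBy_u_one_mul_u_two r (o r 1)

theorem semiconjBy_u_one_mul_u_two_o_two (r : ℕ) :
    SemiconjBy (u r 1 * u r 2) (o r 2) (o r 2) := by
  simpa only [u_one_conj_u_two_conj_o_two] using semiconjBy_u_one_mul_u_two r (o r 2)

theorem semiconjBy_u_one_mul_u_two_o_one_mul_o_two {r : ℕ} (hr : r ≠ 0) :
    SemiconjBy (u r 1 * u r 2) (o r 1 * o r 2) ((o r 1 * o r 2) ^ r) := by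
  have hpow : o r 1 * o r r * o r 1 * o r 2 = (o r 1 * o r 2) ^ r := by
    obtain ⟨k, rfl⟩ := Nat.exists_eq_succ_of_ne_zero hr
    rw [mul_assoc, o_one_mul_o_succ le_rfl (Even.add_self _), ← pow_succ]
  exact hpow ▸ (semiconjBy_u_one_mul_u_two_o_one r).mul_right (semiconjBy_u_one_mul_u_two_o_two r)

theorem u_two_mul_u_one (r : ℕ) : u r 2 * u r 1 = (u r 1 * u r 2)⁻¹ := by
  rw [mul_inv_rev, inv_eq_of_mul_eq_one_right (u_mul_self r 1),
    inv_eq_of_mul_eq_one_right (u_mul_self r 2)]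

theorem u_one_mul_u_two_conj_o_two (r : ℕ) :
    u r 1 * u r 2 * o r 2 * (u r 2 * u r 1) = o r 2 := by
  rw [u_two_mul_u_one, mul_inv_eq_iff_eq_mul]
  exact semiconjBy_u_one_mul_u_two_o_two r

theorem u_one_mul_u_two_pow_conj_o_one_mul_o_two {r : ℕ} (hr : r ≠ 0) (j : ℕ) :
    (u r 1 * u r 2) ^ j * (o r 1 * o r 2) * (u r 2 * u r 1) ^ j = (o r 1 * o r 2) ^ r ^ j := by
  rw [u_two_mul_u_one, inv_pow, mul_inv_eq_iff_eq_mul]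
  exact semiconjBy_pow_left_of_pow (semiconjBy_u_one_mul_u_two_o_one_mul_o_two hr) j

end P0

/-- In `𝒫₀`: `(u₁u₂)·o₂·(u₂u₁) = o₂`, and for every `j ≥ 1`,
`(u₁u₂)^j (o₁o₂) (u₂u₁)^j = (o₁o₂)^{r^j}`.  (`PresentedGroup.mk` is the canonical
projection of the free group onto `𝒫₀`.) -/
theorem stmt_2 (r : ℕ) (hr : 2 ≤ r) :
    PresentedGroup.mk (P0Rels r) (uW r 1 * uW r 2 * oW r 2 * (uW r 2 * uW r 1)) =
      PresentedGroup.mk (P0Rels r) (oW r 2) ∧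
    ∀ j : ℕ, 1 ≤ j →
      PresentedGroup.mk (P0Rels r)
          ((uW r 1 * uW r 2) ^ j * (oW r 1 * oW r 2) * (uW r 2 * uW r 1) ^ j) =
        PresentedGroup.mk (P0Rels r) ((oW r 1 * oW r 2) ^ r ^ j) := by
  refine ⟨?_, fun j _ ↦ ?_⟩
  · simpa only [map_mul, P0.o, P0.u] using P0.u_one_mul_u_two_conj_o_two r
  · simpa only [map_mul, map_pow, P0.o, P0.u] using
      P0.u_one_mul_u_two_pow_conj_o_one_mul_o_two (Nat.ne_zero_of_lt hr) j
end

section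
/- In the group 𝒫₁ the following hold for every triple (i,j,k) ∈ C(r): d_i c_j d_i = b_k and a_i a_j a_i = a_k. -/
/-- The relabelled generator-word `a_i` of `𝒫₀`: `a₁ = o₁`, `a₂ = o₂`, `a_{i+2} = u_i`
for `i = 1, …, 5`, and `a_j = o_{j−5}` for `j = 8, …, r+5`. -/
def aW (r : ℕ) (i : ℕ) : FreeGroup (P0Gen r) :=
  if i ≤ 2 then oW r i else if i ≤ 7 then uW r (i - 2) else oW r (i - 5)

/-- `C(r)`: the set of triples `(i,j,k)` such that `a_i a_j a_i = a_k` is one of the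
conjugacy relations of `𝒫₀`. -/
def Cset (r : ℕ) : Set (ℕ × ℕ × ℕ) :=
  {t | aW r t.1 * aW r t.2.1 * aW r t.1 * (aW r t.2.2)⁻¹ ∈ P0RelsU r ∪ P0RelsO r}

/-- The generators `a_i, b_i, c_i, d_i` (`1 ≤ i ≤ r+5`), `f₀`, and `h_{jk}` (one for each
triple `(i,j,k) ∈ C(r)`) of the group `𝒫₁`. -/
inductive P1Gen (r : ℕ) : Type
  | a : Fin (r + 5) → P1Gen r
  | b : Fin (r + 5) → P1Gen r
  | c : Fin (r + 5) → P1Gen r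
  | d : Fin (r + 5) → P1Gen r
  | f0 : P1Gen r
  | h : {t : ℕ × ℕ × ℕ // t ∈ Cset r} → P1Gen r

/-- The free-group letter `a_i` of `𝒫₁` (`1 ≤ i ≤ r+5`; junk value `1` out of range). -/
def aw (r : ℕ) (i : ℕ) : FreeGroup (P1Gen r) :=
  if h : 1 ≤ i ∧ i ≤ r + 5 then FreeGroup.of (P1Gen.a ⟨i - 1, by omega⟩) else 1

/-- The free-group letter `b_i` of `𝒫₁`. -/
def bw (r : ℕ) (i : ℕ) : FreeGroup (P1Gen r) :=
  if h : 1 ≤ i ∧ i ≤ r + 5 then FreeGroup.of (P1Gen.b ⟨i - 1, by omega⟩) else 1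

/-- The free-group letter `c_i` of `𝒫₁`. -/
def cw (r : ℕ) (i : ℕ) : FreeGroup (P1Gen r) :=
  if h : 1 ≤ i ∧ i ≤ r + 5 then FreeGroup.of (P1Gen.c ⟨i - 1, by omega⟩) else 1

/-- The free-group letter `d_i` of `𝒫₁`. -/
def dw (r : ℕ) (i : ℕ) : FreeGroup (P1Gen r) :=
  if h : 1 ≤ i ∧ i ≤ r + 5 then FreeGroup.of (P1Gen.d ⟨i - 1, by omega⟩) else 1

/-- The free-group letter `f₀` of `𝒫₁`. -/
def fw (r : ℕ) : FreeGroup (P1Gen r) := FreeGroup.of P1Gen.f0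

/-- The free-group letter `h_{jk}` of `𝒫₁`, for `(i,j,k) ∈ C(r)`. -/
def hw (r : ℕ) (t : {t : ℕ × ℕ × ℕ // t ∈ Cset r}) : FreeGroup (P1Gen r) :=
  FreeGroup.of (P1Gen.h t)

/-- The defining relations of `𝒫₁`: all generators are involutions; `a_i = b_i c_i`,
`a_i = f₀ d_i`, `f₀ b_i f₀ = c_i` for `1 ≤ i ≤ r+5`; and `h_{jk} b_j c_k = e`,
`d_i b_j d_i = c_k` for `(i,j,k) ∈ C(r)`. -/
def P1Rels (r : ℕ) : Set (FreeGroup (P1Gen r)) :=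
  (Set.range fun g : P1Gen r => FreeGroup.of g * FreeGroup.of g) ∪
  (⋃ i ∈ Finset.Icc 1 (r + 5),
    ({bw r i * cw r i * (aw r i)⁻¹,
      fw r * dw r i * (aw r i)⁻¹,
      fw r * bw r i * fw r * (cw r i)⁻¹} : Set (FreeGroup (P1Gen r)))) ∪
  (⋃ t : {t : ℕ × ℕ × ℕ // t ∈ Cset r},
    ({hw r t * bw r t.1.2.1 * cw r t.1.2.2,
      dw r t.1.1 * bw r t.1.2.1 * dw r t.1.1 * (cw r t.1.2.2)⁻¹} :
        Set (FreeGroup (P1Gen r))))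

/-- The group `𝒫₁`, presented by the above generators and relations. -/
abbrev P1 (r : ℕ) : Type := PresentedGroup (P1Rels r)

/-! Conjugation by `f₀` swaps `b_i` and `c_i`, hence sends `a_i = b_i c_i` to
`c_i b_i = a_i⁻¹ = a_i`. As `f₀`, `d_i` and `f₀ d_i = a_i` are involutions, `f₀` and `d_i` commute.
Conjugating the relation `d_i b_j d_i = c_k` by `f₀` therefore gives `d_i c_j d_i = b_k`, so that
`d_i` conjugates `a_j = b_j c_j` to `c_k b_k = a_k`, and then so does `a_i = f₀ d_i`. -/

section Involution

variable {M : Type*} [Monoid M] {s t x y : M}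

theorem semiconjBy_iff_of_mul_self_eq_one (hs : s * s = 1) : SemiconjBy s x y ↔ s * x * s = y := by
  constructor
  · intro h
    rw [h.eq, mul_assoc, hs, mul_one]
  · rintro rfl
    rw [SemiconjBy, mul_assoc (s * x), hs, mul_one]

theorem semiconjBy_symm_of_mul_self_eq_one (hs : s * s = 1) (h : SemiconjBy s x y) :
    SemiconjBy s y x := by
  rw [semiconjBy_iff_of_mul_self_eq_one hs, mul_assoc, ← h.eq, ← mul_assoc, hs, one_mul]

theorem commute_of_mul_self_eq_one (hs : s * s = 1) (ht : t * t = 1) (hst : s * t * (s * t) = 1) :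
    Commute s t :=
  calc
    s * t = s * (s * t * (s * t)) * t := by rw [hst, mul_one]
    _ = s * s * (t * s) * (t * t) := by simp only [mul_assoc]
    _ = t * s := by rw [hs, ht, one_mul, mul_one]

end Involution

namespace P1

variable (r : ℕ)

/-- The element `a_i` of `𝒫₁`; it is `1` unless `1 ≤ i ≤ r + 5`. -/
def a (i : ℕ) : P1 r := PresentedGroup.mk (P1Rels r) (aw r i)

/-- The element `b_i` of `𝒫₁`; it is `1` unless `1 ≤ i ≤ r + 5`. -/
def b (i : ℕ) : P1 r := PresentedGroup.mk (P1Rels r) (bw r i)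

/-- The element `c_i` of `𝒫₁`; it is `1` unless `1 ≤ i ≤ r + 5`. -/
def c (i : ℕ) : P1 r := PresentedGroup.mk (P1Rels r) (cw r i)

/-- The element `d_i` of `𝒫₁`; it is `1` unless `1 ≤ i ≤ r + 5`. -/
def d (i : ℕ) : P1 r := PresentedGroup.mk (P1Rels r) (dw r i)

/-- The element `f₀` of `𝒫₁`. -/
def f₀ : P1 r := PresentedGroup.mk (P1Rels r) (fw r)

theorem of_mul_self (g : P1Gen r) : (PresentedGroup.of g * PresentedGroup.of g : P1 r) = 1 :=
  PresentedGroup.one_of_mem (Or.inl (Or.inl ⟨g, rfl⟩))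

theorem f₀_mul_self : f₀ r * f₀ r = 1 :=
  of_mul_self r P1Gen.f0

theorem a_mul_self (i : ℕ) : a r i * a r i = 1 := by
  unfold a aw
  split_ifs
  exacts [of_mul_self r _, one_mul 1]

theorem b_mul_self (i : ℕ) : b r i * b r i = 1 := by
  unfold b bw
  split_ifs
  exacts [of_mul_self r _, one_mul 1]

theorem c_mul_self (i : ℕ) : c r i * c r i = 1 := by
  unfold c cw
  split_ifs
  exacts [of_mul_self r _, one_mul 1]

theorem d_mul_self (i : ℕ) : d r i * d r i = 1 := by
  unfold d dw
  split_ifs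
  exacts [of_mul_self r _, one_mul 1]

variable {r} in
theorem mem_P1Rels_of_index {i : ℕ} {w : FreeGroup (P1Gen r)} (hi : 1 ≤ i ∧ i ≤ r + 5)
    (hmem : w ∈ ({bw r i * cw r i * (aw r i)⁻¹, fw r * dw r i * (aw r i)⁻¹,
      fw r * bw r i * fw r * (cw r i)⁻¹} : Set (FreeGroup (P1Gen r)))) : w ∈ P1Rels r :=
  Or.inl (Or.inr (Set.mem_biUnion (Finset.mem_Icc.mpr hi) hmem))

theorem a_eq_b_mul_c (i : ℕ) : a r i = b r i * c r i := by
  by_cases hi : 1 ≤ i ∧ i ≤ r + 5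
  · exact (PresentedGroup.mk_eq_mk_of_mul_inv_mem (mem_P1Rels_of_index hi (by simp))).symm
  · simp [a, b, c, aw, bw, cw, hi]

theorem a_eq_f₀_mul_d_or_eq_one (i : ℕ) : a r i = f₀ r * d r i ∨ a r i = 1 ∧ d r i = 1 := by
  by_cases hi : 1 ≤ i ∧ i ≤ r + 5
  · exact .inl (PresentedGroup.mk_eq_mk_of_mul_inv_mem (mem_P1Rels_of_index hi (by simp))).symm
  · exact .inr (by simp [a, d, aw, dw, hi])

theorem f₀_semiconjBy_b_c (i : ℕ) : SemiconjBy (f₀ r) (b r i) (c r i) := by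
  rw [semiconjBy_iff_of_mul_self_eq_one (f₀_mul_self r)]
  by_cases hi : 1 ≤ i ∧ i ≤ r + 5
  · exact PresentedGroup.mk_eq_mk_of_mul_inv_mem (mem_P1Rels_of_index hi (by simp))
  · simp [b, c, bw, cw, hi, f₀_mul_self]

theorem f₀_semiconjBy_c_b (i : ℕ) : SemiconjBy (f₀ r) (c r i) (b r i) :=
  semiconjBy_symm_of_mul_self_eq_one (f₀_mul_self r) (f₀_semiconjBy_b_c r i)

theorem b_commute_c (i : ℕ) : Commute (b r i) (c r i) :=
  commute_of_mul_self_eq_one (b_mul_self r i) (c_mul_self r i) (a_eq_b_mul_c r i ▸ a_mul_self r i)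

theorem f₀_commute_a (i : ℕ) : Commute (f₀ r) (a r i) := by
  have f₀_swaps : SemiconjBy (f₀ r) (b r i * c r i) (c r i * b r i) :=
    (f₀_semiconjBy_b_c r i).mul_right (f₀_semiconjBy_c_b r i)
  rwa [← (b_commute_c r i).eq, ← a_eq_b_mul_c] at f₀_swaps

theorem f₀_commute_d (i : ℕ) : Commute (f₀ r) (d r i) := by
  rcases a_eq_f₀_mul_d_or_eq_one r i with ha | ⟨-, hd⟩
  · exact commute_of_mul_self_eq_one (f₀_mul_self r) (d_mul_self r i) (ha ▸ a_mul_self r i)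
  · exact hd ▸ Commute.one_right (f₀ r)

variable {r} {i j k : ℕ}

theorem d_semiconjBy_b_c (hijk : (i, j, k) ∈ Cset r) :
    SemiconjBy (d r i) (b r j) (c r k) :=
  (semiconjBy_iff_of_mul_self_eq_one (d_mul_self r i)).mpr <|
    PresentedGroup.mk_eq_mk_of_mul_inv_mem <|
      Or.inr (Set.mem_iUnion.mpr ⟨⟨(i, j, k), hijk⟩, Or.inr rfl⟩)

theorem d_semiconjBy_c_b (hijk : (i, j, k) ∈ Cset r) :
    SemiconjBy (d r i) (c r j) (b r k) := by
  have f₀_conj_d : SemiconjBy (f₀ r * d r i * f₀ r) (c r j) (b r k) :=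
    ((f₀_semiconjBy_c_b r k).mul_left (d_semiconjBy_b_c hijk)).mul_left (f₀_semiconjBy_c_b r j)
  rwa [(semiconjBy_iff_of_mul_self_eq_one (f₀_mul_self r)).mp (f₀_commute_d r i)] at f₀_conj_d

theorem d_semiconjBy_a_a (hijk : (i, j, k) ∈ Cset r) :
    SemiconjBy (d r i) (a r j) (a r k) := by
  rw [a_eq_b_mul_c r j, a_eq_b_mul_c r k, (b_commute_c r k).eq]
  exact (d_semiconjBy_b_c hijk).mul_right (d_semiconjBy_c_b hijk)

theorem a_semiconjBy_a_a (hijk : (i, j, k) ∈ Cset r) :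
    SemiconjBy (a r i) (a r j) (a r k) := by
  rcases a_eq_f₀_mul_d_or_eq_one r i with ha | ⟨ha, hd⟩
  · exact ha ▸ (f₀_commute_a r k).semiconjBy.mul_left (d_semiconjBy_a_a hijk)
  · exact (ha.trans hd.symm) ▸ d_semiconjBy_a_a hijk

end P1

/-- In `𝒫₁`, for every triple `(i,j,k) ∈ C(r)`: `d_i c_j d_i = b_k`
and `a_i a_j a_i = a_k`. -/
theorem stmt_4 (r : ℕ) (hr : 2 ≤ r) (i j k : ℕ) (hijk : (i, j, k) ∈ Cset r) :
    PresentedGroup.mk (P1Rels r) (dw r i * cw r j * dw r i) =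
      PresentedGroup.mk (P1Rels r) (bw r k) ∧
    PresentedGroup.mk (P1Rels r) (aw r i * aw r j * aw r i) =
      PresentedGroup.mk (P1Rels r) (aw r k) := by
  simp only [map_mul]
  exact ⟨(semiconjBy_iff_of_mul_self_eq_one (P1.d_mul_self r i)).mp (P1.d_semiconjBy_c_b hijk),
    (semiconjBy_iff_of_mul_self_eq_one (P1.a_mul_self r i)).mp (P1.a_semiconjBy_a_a hijk)⟩
end

section
/- There exists an injective group homomorphism φ : 𝒫₀ → 𝒫₁ mapping each generator a_i of 𝒫₀ (under the relabeling a₁ = o₁, a₂ = o₂, a_{i+2} = u_i, a_j = o_{j−5}) to the generator a_i of 𝒫₁; that is, 𝒫₀ embeds into 𝒫₁. -/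
/-!
The relations of `𝒫₁` force `a_i a_j a_i = a_k` for `(i, j, k) ∈ C(r)`: since `a_i = f₀ d_i` is an
involution, `f₀` and `d_i` commute, so conjugation by `a_i` takes `b_j` to `b_k` and
`c_j = f₀ b_j f₀` to `c_k = f₀ b_k f₀`. Hence `a_i ↦ a_i` defines a homomorphism `𝒫₀ → 𝒫₁`. It is
injective because `𝒫₁` has a doubling picture of `𝒫₀`: in `(𝒫₀ × 𝒫₀) ⋊ Aut (𝒫₀ × 𝒫₀)`, let
`f₀` be the swap of the two factors, `b_i = (a_i, 1)`, `c_i = (1, a_i)`, `d_i = f₀ (a_i, a_i)` and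
`h_{jk} = (a_j, a_k)`. These elements satisfy the relations of `𝒫₁`, and the composite
`𝒫₀ → 𝒫₁ → (𝒫₀ × 𝒫₀) ⋊ Aut (𝒫₀ × 𝒫₀)` is the diagonal embedding.
-/

section Involutions

variable {G : Type*} [Group G] {f d x y : G}

lemma commute_of_mul_self_eq_one_s5 (hf : f * f = 1) (hd : d * d = 1)
    (hfd : f * d * (f * d) = 1) : Commute f d :=
  calc f * d = (f * d)⁻¹ := eq_inv_of_mul_eq_one_left hfd
    _ = d * f := by
      rw [mul_inv_rev, ← eq_inv_of_mul_eq_one_left hf, ← eq_inv_of_mul_eq_one_left hd]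

lemma conj_mul_conj_of_commute (hf : f * f = 1) (hd : d * d = 1) (hfd : Commute f d)
    (hxy : d * x * d = f * y * f) :
    f * d * (x * (f * x * f)) * (f * d) = y * (f * y * f) := by
  have conj_x : f * d * x * (d * f) = y :=
    calc f * d * x * (d * f) = f * (d * x * d) * f := by group
      _ = f * f * y * (f * f) := by rw [hxy]; group
      _ = y := by rw [hf, one_mul, mul_one]
  have conj_fxf : f * d * (f * x * f) * (f * d) = f * y * f :=
    calc f * d * (f * x * f) * (f * d) = d * (f * f) * x * (f * f) * d := by
          nth_rw 1 [hfd.eq]; group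
      _ = f * y * f := by rw [hf, mul_one, mul_one, hxy]
  calc f * d * (x * (f * x * f)) * (f * d)
      = f * d * x * (d * (f * f) * d) * (f * x * f) * (f * d) := by
        rw [hf, mul_one, hd]; group
    _ = f * d * x * (d * f) * (f * d * (f * x * f) * (f * d)) := by group
    _ = y * (f * y * f) := by rw [conj_x, conj_fxf]

end Involutions

section ConjugationWords

/-- The words `x y x z⁻¹` in generators `x, y, z`, that is, the relators expressing the conjugacy
relations `x y x = z` between involutions. -/
def conjWords (α : Type*) : Set (FreeGroup α) :=
  {w | ∃ x y z : α, w = .of x * .of y * .of x * (.of z)⁻¹}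

/-- The total exponent of a word, written multiplicatively so that it is a group homomorphism;
it distinguishes conjugacy relators from shorter words. -/
def exponentSum (α : Type*) : FreeGroup α →* Multiplicative ℤ :=
  FreeGroup.lift fun _ => Multiplicative.ofAdd 1

variable {α : Type*}

lemma conj_mem_conjWords {x y z : FreeGroup α} (hx : x ∈ Set.range FreeGroup.of)
    (hy : y ∈ Set.range FreeGroup.of) (hz : z ∈ Set.range FreeGroup.of) :
    x * y * x * z⁻¹ ∈ conjWords α := by
  obtain ⟨x, rfl⟩ := hx
  obtain ⟨y, rfl⟩ := hy
  obtain ⟨z, rfl⟩ := hz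
  exact ⟨x, y, z, rfl⟩

lemma exponentSum_of (x : α) : exponentSum α (.of x) = Multiplicative.ofAdd 1 :=
  FreeGroup.lift_apply_of

lemma exponentSum_of_mem_conjWords {w : FreeGroup α} (hw : w ∈ conjWords α) :
    (exponentSum α w).toAdd = 2 := by
  obtain ⟨x, y, z, rfl⟩ := hw
  simp [exponentSum_of]

end ConjugationWords

section Generators

variable {r : ℕ}

lemma oW_mem_range_of {k : ℕ} (h₁ : 1 ≤ k) (h₂ : k ≤ r) : oW r k ∈ Set.range FreeGroup.of := by
  rw [oW, dif_pos ⟨h₁, h₂⟩]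
  exact Set.mem_range_self _

lemma uW_mem_range_of {k : ℕ} (h₁ : 1 ≤ k) (h₂ : k ≤ 5) : uW r k ∈ Set.range FreeGroup.of := by
  rw [uW, dif_pos ⟨h₁, h₂⟩]
  exact Set.mem_range_self _

/-- The index `i` for which the generator is called `a_i` after relabelling. The indices inside
`Fin` start at `0`, those of the `a_i` at `1`. -/
def P0Gen.index : P0Gen r → ℕ
  | .o k => if k.val < 2 then k + 1 else k + 6
  | .u k => k + 3

lemma P0Gen.index_mem_Icc (hr : 2 ≤ r) (g : P0Gen r) : g.index ∈ Finset.Icc 1 (r + 5) := by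
  rw [Finset.mem_Icc]
  cases g <;> grind [P0Gen.index]

lemma aW_index (g : P0Gen r) : aW r g.index = .of g := by
  cases g with
  | o k => by_cases hk : k.val < 2 <;> simp [P0Gen.index, aW, oW, hk]; omega
  | u k => simp [P0Gen.index, aW, uW]; omega

lemma P0Gen.exists_index_eq (hr : 2 ≤ r) {i : ℕ} (hi : i ∈ Finset.Icc 1 (r + 5)) :
    ∃ g : P0Gen r, g.index = i := by
  rw [Finset.mem_Icc] at hi
  obtain h | h | h : i ≤ 2 ∨ (3 ≤ i ∧ i ≤ 7) ∨ 8 ≤ i := by omega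
  · exact ⟨.o ⟨i - 1, by omega⟩, by grind [P0Gen.index]⟩
  · exact ⟨.u ⟨i - 3, by omega⟩, by grind [P0Gen.index]⟩
  · exact ⟨.o ⟨i - 6, by omega⟩, by grind [P0Gen.index]⟩

lemma aW_eq_one_of_notMem (hr : 2 ≤ r) {i : ℕ} (hi : i ∉ Finset.Icc 1 (r + 5)) :
    aW r i = 1 := by
  rw [Finset.mem_Icc] at hi
  unfold aW oW uW
  split_ifs <;> first | rfl | omega

lemma exponentSum_aW (hr : 2 ≤ r) (i : ℕ) :
    (exponentSum _ (aW r i)).toAdd = if i ∈ Finset.Icc 1 (r + 5) then 1 else 0 := by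
  split_ifs with hi
  · obtain ⟨g, rfl⟩ := P0Gen.exists_index_eq hr hi
    rw [aW_index, exponentSum_of, toAdd_ofAdd]
  · rw [aW_eq_one_of_notMem hr hi, map_one, toAdd_one]

end Generators

section ConjugacyRelations

variable {r : ℕ}

lemma P0RelsU_subset_conjWords (hr : 2 ≤ r) : P0RelsU r ⊆ conjWords (P0Gen r) := by
  rintro w (rfl | rfl | rfl | rfl | rfl) <;> apply conj_mem_conjWords <;>
    first
      | exact oW_mem_range_of (by omega) (by omega)
      | exact uW_mem_range_of (by omega) (by omega)

lemma P0RelsO_subset_conjWords (hr : 2 ≤ r) : P0RelsO r ⊆ conjWords (P0Gen r) := by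
  intro w hw
  unfold P0RelsO at hw
  split_ifs at hw with heven
  · simp only [Set.mem_iUnion, Finset.mem_Icc] at hw
    obtain ⟨j, hj, rfl | rfl⟩ := hw <;> apply conj_mem_conjWords <;>
      exact oW_mem_range_of (by omega) (by omega)
  · have three_le : 3 ≤ r := by grind
    simp only [Set.mem_union, Set.mem_iUnion, Finset.mem_Icc] at hw
    obtain rfl | ⟨j, hj, rfl | rfl⟩ := hw <;> apply conj_mem_conjWords <;>
      exact oW_mem_range_of (by omega) (by omega)

lemma P0RelsU_union_P0RelsO_subset_conjWords (hr : 2 ≤ r) :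
    P0RelsU r ∪ P0RelsO r ⊆ conjWords (P0Gen r) :=
  Set.union_subset (P0RelsU_subset_conjWords hr) (P0RelsO_subset_conjWords hr)

lemma index_mem_Cset_iff {x y z : P0Gen r} : (x.index, y.index, z.index) ∈ Cset r ↔
    .of x * .of y * .of x * (.of z)⁻¹ ∈ P0RelsU r ∪ P0RelsO r := by
  simp only [Cset, Set.mem_ofPred_eq, aW_index]

/- Membership in `C(r)` is tested on words, and out-of-range indices stand for the empty word;
comparing exponent sums excludes such an index in first position. -/
lemma fst_mem_Icc_of_mem_Cset (hr : 2 ≤ r) {i j k : ℕ} (h : (i, j, k) ∈ Cset r) :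
    i ∈ Finset.Icc 1 (r + 5) := by
  have hsum := exponentSum_of_mem_conjWords (P0RelsU_union_P0RelsO_subset_conjWords hr h)
  simp only [map_mul, map_inv, toAdd_mul, toAdd_inv, exponentSum_aW hr] at hsum
  by_contra hi
  rw [if_neg hi] at hsum
  split_ifs at hsum <;> omega

end ConjugacyRelations

section P0

variable {r : ℕ}

/-- The projection of words in the generators onto `𝒫₀`. -/
abbrev P0.mk : FreeGroup (P0Gen r) →* P0 r := PresentedGroup.mk (P0Rels r)

lemma P0.mk_of_mul_self (g : P0Gen r) : P0.mk (.of g) * P0.mk (.of g) = 1 := by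
  rw [← map_mul]
  exact PresentedGroup.one_of_mem (.inl (.inl ⟨g, rfl⟩))

lemma P0.mk_aW_mul_self (hr : 2 ≤ r) (i : ℕ) : P0.mk (aW r i) * P0.mk (aW r i) = 1 := by
  by_cases hi : i ∈ Finset.Icc 1 (r + 5)
  · obtain ⟨g, rfl⟩ := P0Gen.exists_index_eq hr hi
    rw [aW_index, P0.mk_of_mul_self]
  · rw [aW_eq_one_of_notMem hr hi, map_one, one_mul]

lemma P0.mk_aW_conj {i j k : ℕ} (h : (i, j, k) ∈ Cset r) :
    P0.mk (aW r i) * P0.mk (aW r j) * P0.mk (aW r i) = P0.mk (aW r k) := by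
  rw [← map_mul, ← map_mul]
  refine PresentedGroup.mk_eq_mk_of_mul_inv_mem ?_
  rw [P0Rels, Set.union_assoc]
  exact .inr h

lemma lift_eq_one_of_mem_P0Rels (hr : 2 ≤ r) {H : Type*} [Group H] {α : P0Gen r → H}
    (mul_self : ∀ g, α g * α g = 1)
    (conj : ∀ x y z : P0Gen r, (x.index, y.index, z.index) ∈ Cset r → α x * α y * α x = α z) :
    ∀ w ∈ P0Rels r, FreeGroup.lift α w = 1 := by
  intro w hw
  rw [P0Rels, Set.union_assoc] at hw
  obtain ⟨g, rfl⟩ | hw := hw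
  · rw [map_mul, FreeGroup.lift_apply_of, mul_self]
  · obtain ⟨x, y, z, rfl⟩ := P0RelsU_union_P0RelsO_subset_conjWords hr hw
    simp only [map_mul, map_inv, FreeGroup.lift_apply_of]
    rw [mul_inv_eq_one, conj x y z (index_mem_Cset_iff.mpr hw)]

end P0

section P1

variable {r : ℕ} {i j k : ℕ}

/-- The projection of words in the generators onto `𝒫₁`. -/
abbrev P1.mk : FreeGroup (P1Gen r) →* P1 r := PresentedGroup.mk (P1Rels r)

lemma P1.mk_of_mul_self (g : P1Gen r) : P1.mk (.of g) * P1.mk (.of g) = 1 := by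
  rw [← map_mul]
  exact PresentedGroup.one_of_mem (.inl (.inl ⟨g, rfl⟩))

lemma P1.mk_aw_mul_self (hi : i ∈ Finset.Icc 1 (r + 5)) :
    P1.mk (aw r i) * P1.mk (aw r i) = 1 := by
  rw [aw, dif_pos (Finset.mem_Icc.mp hi), P1.mk_of_mul_self]

lemma P1.mk_dw_mul_self (hi : i ∈ Finset.Icc 1 (r + 5)) :
    P1.mk (dw r i) * P1.mk (dw r i) = 1 := by
  rw [dw, dif_pos (Finset.mem_Icc.mp hi), P1.mk_of_mul_self]

lemma P1.mk_bw_mul_mk_cw (hi : i ∈ Finset.Icc 1 (r + 5)) :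
    P1.mk (bw r i) * P1.mk (cw r i) = P1.mk (aw r i) := by
  rw [← map_mul]
  exact PresentedGroup.mk_eq_mk_of_mul_inv_mem
    (.inl (.inr (Set.mem_biUnion hi (by simp))))

lemma P1.mk_fw_mul_mk_dw (hi : i ∈ Finset.Icc 1 (r + 5)) :
    P1.mk (fw r) * P1.mk (dw r i) = P1.mk (aw r i) := by
  rw [← map_mul]
  exact PresentedGroup.mk_eq_mk_of_mul_inv_mem
    (.inl (.inr (Set.mem_biUnion hi (by simp))))

lemma P1.mk_fw_mul_mk_bw_mul_mk_fw (hi : i ∈ Finset.Icc 1 (r + 5)) :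
    P1.mk (fw r) * P1.mk (bw r i) * P1.mk (fw r) = P1.mk (cw r i) := by
  rw [← map_mul, ← map_mul]
  exact PresentedGroup.mk_eq_mk_of_mul_inv_mem
    (.inl (.inr (Set.mem_biUnion hi (by simp))))

lemma P1.mk_dw_mul_mk_bw_mul_mk_dw (h : (i, j, k) ∈ Cset r) :
    P1.mk (dw r i) * P1.mk (bw r j) * P1.mk (dw r i) = P1.mk (cw r k) := by
  rw [← map_mul, ← map_mul]
  exact PresentedGroup.mk_eq_mk_of_mul_inv_mem
    (.inr (Set.mem_iUnion.mpr ⟨⟨(i, j, k), h⟩, by simp⟩))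

lemma P1.mk_aw_conj (hi : i ∈ Finset.Icc 1 (r + 5)) (hj : j ∈ Finset.Icc 1 (r + 5))
    (hk : k ∈ Finset.Icc 1 (r + 5)) (h : (i, j, k) ∈ Cset r) :
    P1.mk (aw r i) * P1.mk (aw r j) * P1.mk (aw r i) = P1.mk (aw r k) := by
  have f_mul_self : P1.mk (fw r) * P1.mk (fw r) = 1 := P1.mk_of_mul_self .f0
  have d_mul_self := P1.mk_dw_mul_self hi
  have a_mul_self := P1.mk_aw_mul_self hi
  rw [← P1.mk_fw_mul_mk_dw hi] at a_mul_self
  have commute_f_d := commute_of_mul_self_eq_one_s5 f_mul_self d_mul_self a_mul_self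
  rw [← P1.mk_fw_mul_mk_dw hi, ← P1.mk_bw_mul_mk_cw hj, ← P1.mk_bw_mul_mk_cw hk,
    ← P1.mk_fw_mul_mk_bw_mul_mk_fw hj, ← P1.mk_fw_mul_mk_bw_mul_mk_fw hk]
  refine conj_mul_conj_of_commute f_mul_self d_mul_self commute_f_d ?_
  rw [P1.mk_dw_mul_mk_bw_mul_mk_dw h, P1.mk_fw_mul_mk_bw_mul_mk_fw hk]

/-- The homomorphism `𝒫₀ → 𝒫₁` sending `a_i` to `a_i`. -/
def P0.toP1 (hr : 2 ≤ r) : P0 r →* P1 r :=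
  PresentedGroup.toGroup (f := fun g => P1.mk (aw r g.index)) <|
    lift_eq_one_of_mem_P0Rels hr (fun g => P1.mk_aw_mul_self (g.index_mem_Icc hr)) fun x y z =>
      P1.mk_aw_conj (x.index_mem_Icc hr) (y.index_mem_Icc hr) (z.index_mem_Icc hr)

lemma P0.toP1_mk_of (hr : 2 ≤ r) (g : P0Gen r) :
    P0.toP1 hr (P0.mk (.of g)) = P1.mk (aw r g.index) :=
  PresentedGroup.toGroup.of _

lemma P0.toP1_mk_aW (hr : 2 ≤ r) (hi : i ∈ Finset.Icc 1 (r + 5)) :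
    P0.toP1 hr (P0.mk (aW r i)) = P1.mk (aw r i) := by
  obtain ⟨g, rfl⟩ := P0Gen.exists_index_eq hr hi
  rw [aW_index, P0.toP1_mk_of]

end P1

section Holomorph

open SemidirectProduct

/-- The holomorph `N ⋊ Aut N` of a group. -/
abbrev Holomorph (N : Type*) [Group N] : Type _ := N ⋊[MonoidHom.id (MulAut N)] MulAut N

/-- The exchange of the two factors, as an element of the holomorph of `G × G`; with the two
factors it generates the wreath product of `G` with the group of order two. -/
def swapFactors (G : Type*) [Group G] : Holomorph (G × G) :=
  inr (MulEquiv.prodComm : MulAut (G × G))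

variable {G : Type*} [Group G] {r : ℕ}

lemma swapFactors_mul_self : swapFactors G * swapFactors G = 1 := by
  rw [swapFactors, ← map_mul]
  exact map_one inr

lemma swapFactors_mul_inl (v : G × G) :
    swapFactors G * inl v = inl v.swap * swapFactors G := by
  ext <;> simp [swapFactors]

lemma swapFactors_mul_inl_mul_swapFactors (v : G × G) :
    swapFactors G * inl v * swapFactors G = inl v.swap := by
  rw [swapFactors_mul_inl, mul_assoc, swapFactors_mul_self, mul_one]

lemma inl_mk_mul_self {x y : G} (hx : x * x = 1) (hy : y * y = 1) :
    (inl (x, y) : Holomorph (G × G)) * inl (x, y) = 1 := by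
  rw [← map_mul, Prod.mk_mul_mk, hx, hy]
  exact map_one inl

/-- The images of the generators of `𝒫₁` in the holomorph of `𝒫₀ × 𝒫₀`: two copies of `a_i` in the
two factors, exchanged by `f₀`. Indices in `Fin` start at `0`, those of the `a_i` at `1`. -/
def P1Gen.toHolomorph : P1Gen r → Holomorph (P0 r × P0 r)
  | .a i => inl (P0.mk (aW r (i + 1)), P0.mk (aW r (i + 1)))
  | .b i => inl (P0.mk (aW r (i + 1)), 1)
  | .c i => inl (1, P0.mk (aW r (i + 1)))
  | .d i => swapFactors _ * inl (P0.mk (aW r (i + 1)), P0.mk (aW r (i + 1)))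
  | .f0 => swapFactors _
  | .h t => inl (P0.mk (aW r t.1.2.1), P0.mk (aW r t.1.2.2))

lemma P1Gen.toHolomorph_mul_self (hr : 2 ≤ r) (g : P1Gen r) :
    g.toHolomorph * g.toHolomorph = 1 := by
  have a_mul_self := P0.mk_aW_mul_self hr
  cases g with
  | a i => exact inl_mk_mul_self (a_mul_self _) (a_mul_self _)
  | b i => exact inl_mk_mul_self (a_mul_self _) (one_mul 1)
  | c i => exact inl_mk_mul_self (one_mul 1) (a_mul_self _)
  | d i =>
    rw [P1Gen.toHolomorph, ← mul_assoc, swapFactors_mul_inl_mul_swapFactors]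
    exact inl_mk_mul_self (a_mul_self _) (a_mul_self _)
  | f0 => exact swapFactors_mul_self
  | h t => exact inl_mk_mul_self (a_mul_self _) (a_mul_self _)

lemma lift_toHolomorph_aw (hr : 2 ≤ r) (i : ℕ) :
    FreeGroup.lift P1Gen.toHolomorph (aw r i) = inl (P0.mk (aW r i), P0.mk (aW r i)) := by
  unfold aw
  split_ifs with hi
  · simp only [FreeGroup.lift_apply_of, P1Gen.toHolomorph, Nat.sub_add_cancel hi.1]
  · rw [aW_eq_one_of_notMem hr (by rwa [Finset.mem_Icc]), map_one, map_one]
    exact (map_one inl).symm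

lemma lift_toHolomorph_bw (hr : 2 ≤ r) (i : ℕ) :
    FreeGroup.lift P1Gen.toHolomorph (bw r i) = inl (P0.mk (aW r i), 1) := by
  unfold bw
  split_ifs with hi
  · simp only [FreeGroup.lift_apply_of, P1Gen.toHolomorph, Nat.sub_add_cancel hi.1]
  · rw [aW_eq_one_of_notMem hr (by rwa [Finset.mem_Icc]), map_one, map_one]
    exact (map_one inl).symm

lemma lift_toHolomorph_cw (hr : 2 ≤ r) (i : ℕ) :
    FreeGroup.lift P1Gen.toHolomorph (cw r i) = inl (1, P0.mk (aW r i)) := by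
  unfold cw
  split_ifs with hi
  · simp only [FreeGroup.lift_apply_of, P1Gen.toHolomorph, Nat.sub_add_cancel hi.1]
  · rw [aW_eq_one_of_notMem hr (by rwa [Finset.mem_Icc]), map_one, map_one]
    exact (map_one inl).symm

lemma lift_toHolomorph_dw {i : ℕ} (hi : i ∈ Finset.Icc 1 (r + 5)) :
    FreeGroup.lift P1Gen.toHolomorph (dw r i) =
      swapFactors _ * inl (P0.mk (aW r i), P0.mk (aW r i)) := by
  rw [Finset.mem_Icc] at hi
  simp only [dw, dif_pos hi, FreeGroup.lift_apply_of, P1Gen.toHolomorph, Nat.sub_add_cancel hi.1]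

lemma lift_toHolomorph_fw : FreeGroup.lift P1Gen.toHolomorph (fw r) = swapFactors _ :=
  FreeGroup.lift_apply_of

lemma lift_toHolomorph_hw (t : {t : ℕ × ℕ × ℕ // t ∈ Cset r}) :
    FreeGroup.lift P1Gen.toHolomorph (hw r t) =
      inl (P0.mk (aW r t.1.2.1), P0.mk (aW r t.1.2.2)) :=
  FreeGroup.lift_apply_of

lemma lift_toHolomorph_dw_mul_bw_mul_dw (hr : 2 ≤ r) {i j k : ℕ} (h : (i, j, k) ∈ Cset r) :
    FreeGroup.lift P1Gen.toHolomorph (dw r i * bw r j * dw r i) =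
      FreeGroup.lift P1Gen.toHolomorph (cw r k) := by
  rw [map_mul, map_mul, lift_toHolomorph_dw (fst_mem_Icc_of_mem_Cset hr h),
    lift_toHolomorph_bw hr, lift_toHolomorph_cw hr]
  set a := P0.mk (aW r i)
  set b := P0.mk (aW r j)
  calc swapFactors (P0 r) * inl (a, a) * inl (b, 1) * (swapFactors _ * inl (a, a))
      = swapFactors _ * inl (a * b, a) * swapFactors _ * inl (a, a) := by
        rw [mul_assoc (swapFactors _), ← map_mul, Prod.mk_mul_mk, mul_one, ← mul_assoc]
    _ = inl (a * a, a * b * a) := by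
        rw [swapFactors_mul_inl_mul_swapFactors, ← map_mul, Prod.swap_prod_mk, Prod.mk_mul_mk]
    _ = inl (1, P0.mk (aW r k)) := by
        rw [P0.mk_aW_mul_self hr, P0.mk_aW_conj h]

lemma lift_toHolomorph_eq_one_of_mem_P1Rels (hr : 2 ≤ r) :
    ∀ w ∈ P1Rels r, FreeGroup.lift P1Gen.toHolomorph w = 1 := by
  rintro w ((⟨g, rfl⟩ | hw) | hw)
  · rw [map_mul, FreeGroup.lift_apply_of, P1Gen.toHolomorph_mul_self hr]
  · obtain ⟨i, hi, hw⟩ := Set.mem_iUnion₂.mp hw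
    obtain rfl | rfl | rfl := hw <;> rw [map_mul, map_inv, mul_inv_eq_one]
    · rw [map_mul, lift_toHolomorph_aw hr, lift_toHolomorph_bw hr, lift_toHolomorph_cw hr,
        ← map_mul, Prod.mk_mul_mk, mul_one, one_mul]
    · rw [map_mul, lift_toHolomorph_aw hr, lift_toHolomorph_dw hi, lift_toHolomorph_fw,
        ← mul_assoc, swapFactors_mul_self, one_mul]
    · rw [map_mul, map_mul, lift_toHolomorph_bw hr, lift_toHolomorph_cw hr, lift_toHolomorph_fw,
        swapFactors_mul_inl_mul_swapFactors, Prod.swap_prod_mk]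
  · obtain ⟨⟨⟨i, j, k⟩, h⟩, rfl | rfl⟩ := Set.mem_iUnion.mp hw
    · rw [map_mul, map_mul, lift_toHolomorph_bw hr, lift_toHolomorph_cw hr, lift_toHolomorph_hw,
        mul_assoc, ← map_mul, Prod.mk_mul_mk, mul_one, one_mul,
        inl_mk_mul_self (P0.mk_aW_mul_self hr _) (P0.mk_aW_mul_self hr _)]
    · rw [map_mul, map_inv, mul_inv_eq_one, lift_toHolomorph_dw_mul_bw_mul_dw hr h]

/-- The doubling picture of `𝒫₁`, used to recover an element of `𝒫₀` from its image in `𝒫₁`. -/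
def P1.toHolomorph (hr : 2 ≤ r) : P1 r →* Holomorph (P0 r × P0 r) :=
  PresentedGroup.toGroup (lift_toHolomorph_eq_one_of_mem_P1Rels hr)

lemma P1.toHolomorph_mk_aw (hr : 2 ≤ r) (i : ℕ) :
    P1.toHolomorph hr (P1.mk (aw r i)) = inl (P0.mk (aW r i), P0.mk (aW r i)) :=
  lift_toHolomorph_aw hr i

lemma P1.toHolomorph_comp_toP1 (hr : 2 ≤ r) : (P1.toHolomorph hr).comp (P0.toP1 hr) =
    inl.comp ((MonoidHom.id (P0 r)).prod (MonoidHom.id (P0 r))) := by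
  refine PresentedGroup.ext fun g => ?_
  change P1.toHolomorph hr (P0.toP1 hr (P0.mk (.of g))) = inl (P0.mk (.of g), P0.mk (.of g))
  rw [P0.toP1_mk_of, P1.toHolomorph_mk_aw, aW_index]

lemma P0.toP1_injective (hr : 2 ≤ r) : Function.Injective (P0.toP1 hr) := by
  have diagonal (x : P0 r) : P1.toHolomorph hr (P0.toP1 hr x) = inl (x, x) :=
    DFunLike.congr_fun (P1.toHolomorph_comp_toP1 hr) x
  intro x y hxy
  have inl_eq : (inl (x, x) : Holomorph (P0 r × P0 r)) = inl (y, y) := by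
    rw [← diagonal, ← diagonal, hxy]
  exact congrArg Prod.fst (inl_injective inl_eq)

end Holomorph

/-- `𝒫₀` embeds into `𝒫₁`: there is an injective group homomorphism
`φ : 𝒫₀ → 𝒫₁` mapping each (relabelled) generator `a_i` of `𝒫₀` to the generator `a_i`
of `𝒫₁`. -/
theorem stmt_5 (r : ℕ) (hr : 2 ≤ r) :
    ∃ φ : P0 r →* P1 r, Function.Injective φ ∧
      ∀ i ∈ Finset.Icc 1 (r + 5),
        φ (PresentedGroup.mk (P0Rels r) (aW r i)) = PresentedGroup.mk (P1Rels r) (aw r i) :=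
  ⟨P0.toP1 hr, P0.toP1_injective hr, fun _ hi => P0.toP1_mk_aW hr hi⟩
end

section
/- There exists an injective group homomorphism φ : 𝒫₁ → Γ mapping each generator of 𝒫₁ (each a_i, b_i, c_i, d_i, f₀, and each h_{jk}) to the same-named generator of Γ; that is, 𝒫₁ embeds into Γ. -/
/-- The generators of the solution group `Γ`: `a_i, b_i, c_i, d_i, p_{i,1}, …, p_{i,5}`
(`1 ≤ i ≤ r+5`), `f₀, f₁, f₂, g₀, g₁, g₂, m₀, m₁, m₂`, `h_{jk}` and `q_{c,1}, …, q_{c,6}`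
(one family for each `c = (i,j,k) ∈ C(r)`), together with the central generator `J`. -/
inductive GaGen (r : ℕ) : Type
  | a : Fin (r + 5) → GaGen r
  | b : Fin (r + 5) → GaGen r
  | c : Fin (r + 5) → GaGen r
  | d : Fin (r + 5) → GaGen r
  | p : Fin (r + 5) → Fin 5 → GaGen r
  | f : Fin 3 → GaGen r
  | g : Fin 3 → GaGen r
  | m : Fin 3 → GaGen r
  | h : {t : ℕ × ℕ × ℕ // t ∈ Cset r} → GaGen r
  | q : {t : ℕ × ℕ × ℕ // t ∈ Cset r} → Fin 6 → GaGen r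
  | J : GaGen r

/-- The free-group letter `a_i` of `Γ` (`1 ≤ i ≤ r+5`; junk value `1` out of range). -/
def ga (r : ℕ) (i : ℕ) : FreeGroup (GaGen r) :=
  if h : 1 ≤ i ∧ i ≤ r + 5 then FreeGroup.of (GaGen.a ⟨i - 1, by omega⟩) else 1

/-- The free-group letter `b_i` of `Γ`. -/
def gb (r : ℕ) (i : ℕ) : FreeGroup (GaGen r) :=
  if h : 1 ≤ i ∧ i ≤ r + 5 then FreeGroup.of (GaGen.b ⟨i - 1, by omega⟩) else 1

/-- The free-group letter `c_i` of `Γ`. -/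
def gc (r : ℕ) (i : ℕ) : FreeGroup (GaGen r) :=
  if h : 1 ≤ i ∧ i ≤ r + 5 then FreeGroup.of (GaGen.c ⟨i - 1, by omega⟩) else 1

/-- The free-group letter `d_i` of `Γ`. -/
def gd (r : ℕ) (i : ℕ) : FreeGroup (GaGen r) :=
  if h : 1 ≤ i ∧ i ≤ r + 5 then FreeGroup.of (GaGen.d ⟨i - 1, by omega⟩) else 1

/-- The free-group letter `p_{i,l}` of `Γ` (`1 ≤ i ≤ r+5`, `1 ≤ l ≤ 5`). -/
def gp (r : ℕ) (i l : ℕ) : FreeGroup (GaGen r) :=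
  if h : (1 ≤ i ∧ i ≤ r + 5) ∧ (1 ≤ l ∧ l ≤ 5) then
    FreeGroup.of (GaGen.p ⟨i - 1, by omega⟩ ⟨l - 1, by omega⟩) else 1

/-- The free-group letter `f_l` of `Γ` (`0 ≤ l ≤ 2`). -/
def gf (r : ℕ) (l : ℕ) : FreeGroup (GaGen r) :=
  if h : l ≤ 2 then FreeGroup.of (GaGen.f ⟨l, by omega⟩) else 1

/-- The free-group letter `g_l` of `Γ` (`0 ≤ l ≤ 2`). -/
def gg (r : ℕ) (l : ℕ) : FreeGroup (GaGen r) :=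
  if h : l ≤ 2 then FreeGroup.of (GaGen.g ⟨l, by omega⟩) else 1

/-- The free-group letter `m_l` of `Γ` (`0 ≤ l ≤ 2`). -/
def gm (r : ℕ) (l : ℕ) : FreeGroup (GaGen r) :=
  if h : l ≤ 2 then FreeGroup.of (GaGen.m ⟨l, by omega⟩) else 1

/-- The free-group letter `h_{jk}` of `Γ`, for `(i,j,k) ∈ C(r)`. -/
def gh (r : ℕ) (t : {t : ℕ × ℕ × ℕ // t ∈ Cset r}) : FreeGroup (GaGen r) :=
  FreeGroup.of (GaGen.h t)

/-- The free-group letter `q_{c,l}` of `Γ`, for `c ∈ C(r)` and `1 ≤ l ≤ 6`. -/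
def gq (r : ℕ) (t : {t : ℕ × ℕ × ℕ // t ∈ Cset r}) (l : ℕ) : FreeGroup (GaGen r) :=
  if h : 1 ≤ l ∧ l ≤ 6 then FreeGroup.of (GaGen.q t ⟨l - 1, by omega⟩) else 1

/-- The free-group letter `J` of `Γ`. -/
def gJ (r : ℕ) : FreeGroup (GaGen r) := FreeGroup.of GaGen.J

/-- The relators of `Γ` corresponding to the linear equations of the binary linear
system: for each `1 ≤ i ≤ r+5` the relations `a_i = b_i c_i`, `a_i = f₀ d_i`,
`f₀f₁f₂ = e`, `b_i f₂ p_{i,1} = e`, `p_{i,1}p_{i,2}p_{i,3} = e`, `f₀p_{i,3}p_{i,4} = e`,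
`c_i p_{i,4} p_{i,5} = e`, `f₁ p_{i,2} p_{i,5} = e`; for each `c = (i,j,k) ∈ C(r)` the
relations `h_{jk} b_j c_k = e`, `d_i q_{c,1} f₂ = e`, `b_j f₂ q_{c,2} = e`,
`q_{c,2}q_{c,3}q_{c,4} = e`, `d_i q_{c,4} q_{c,5} = e`, `c_k q_{c,5} q_{c,6} = e`,
`q_{c,1} q_{c,3} q_{c,6} = e`; and the Magic Square relations `g₀g₁g₂ = e`,
`m₀m₁m₂ = e`, `f₀g₂m₀ = e`, `f₂g₀m₁ = e`, `f₁g₁m₂ = J`. -/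
def GaRelsLin (r : ℕ) : Set (FreeGroup (GaGen r)) :=
  (⋃ i ∈ Finset.Icc 1 (r + 5),
    ({gb r i * gc r i * (ga r i)⁻¹,
      gf r 0 * gd r i * (ga r i)⁻¹,
      gf r 0 * gf r 1 * gf r 2,
      gb r i * gf r 2 * gp r i 1,
      gp r i 1 * gp r i 2 * gp r i 3,
      gf r 0 * gp r i 3 * gp r i 4,
      gc r i * gp r i 4 * gp r i 5,
      gf r 1 * gp r i 2 * gp r i 5} : Set (FreeGroup (GaGen r)))) ∪
  (⋃ t : {t : ℕ × ℕ × ℕ // t ∈ Cset r},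
    ({gh r t * gb r t.1.2.1 * gc r t.1.2.2,
      gd r t.1.1 * gq r t 1 * gf r 2,
      gb r t.1.2.1 * gf r 2 * gq r t 2,
      gq r t 2 * gq r t 3 * gq r t 4,
      gd r t.1.1 * gq r t 4 * gq r t 5,
      gc r t.1.2.2 * gq r t 5 * gq r t 6,
      gq r t 1 * gq r t 3 * gq r t 6} : Set (FreeGroup (GaGen r)))) ∪
  ({gg r 0 * gg r 1 * gg r 2,
    gm r 0 * gm r 1 * gm r 2,
    gf r 0 * gg r 2 * gm r 0,
    gf r 2 * gg r 0 * gm r 1,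
    gf r 1 * gg r 1 * gm r 2 * (gJ r)⁻¹} : Set (FreeGroup (GaGen r)))

/-- All defining relations of `Γ`: `s² = e` for every generator (including `J² = e`),
`J s J s = e` for every generator `s ≠ J`, and the linear relators above. -/
def GaRels (r : ℕ) : Set (FreeGroup (GaGen r)) :=
  (Set.range fun s : GaGen r => FreeGroup.of s * FreeGroup.of s) ∪
  ((fun s : GaGen r => gJ r * FreeGroup.of s * gJ r * FreeGroup.of s) ''
    {s : GaGen r | s ≠ GaGen.J}) ∪
  GaRelsLin r

/-- The solution group `Γ`, presented by the above generators and relations. -/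
abbrev Ga (r : ℕ) : Type := PresentedGroup (GaRels r)

/-! The relation `d b d = c` among involutions is enforced in `Γ` by a gadget: a linear system in
six auxiliary involutions `q₁, …, q₆` together with `f₂`. The auxiliary generators `f₁, p_{i,1}, …,
p_{i,5}` form the gadget for `f₀ b_i f₀ = c_i`, and `q_{c,1}, …, q_{c,6}` the one for
`d_i b_j d_i = c_k`. Eliminating the auxiliary unknowns gives the homomorphism `𝒫₁ → Γ`.

For injectivity we extend an injective homomorphism on `𝒫₁` to `Γ`. Let `ε : 𝒫₁ → {±1}` be the
character that is `-1` on `d_i` and `f₀` and `1` on the other generators, and embed `𝒫₁` in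
`𝒫₁ ≀ ℤ/2` by `p ↦ (p, p; ε p)`. The swap of the two coordinates commutes with the image and serves
as `f₂`. In each gadget take `q₆ = (1, bc; 1)`; it commutes with `b` and `c`, while conjugation by
it multiplies both `d` and the swap by `bc`, and the other `q_l` are then forced. -/

section LinearSystems

variable {K : Type*} [Group K]

theorem mul_mul_self_eq_one_of_commute {x y : K} (hx : x * x = 1) (hy : y * y = 1)
    (h : Commute x y) : x * y * (x * y) = 1 := by
  rw [h.symm.mul_mul_mul_comm, hx, hy, one_mul]

theorem commute_of_mul_self_eq_one_s7 {x y : K} (hx : x * x = 1) (hy : y * y = 1)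
    (hxy : x * y * (x * y) = 1) : Commute x y := by
  have h : (x * y)⁻¹ = x * y := inv_eq_of_mul_eq_one_left hxy
  rwa [mul_inv_rev, inv_eq_of_mul_eq_one_left hx, inv_eq_of_mul_eq_one_left hy, eq_comm] at h

theorem mul_eq_of_mul_mul_eq_one {x y w : K} (hw : w * w = 1) (h : x * y * w = 1) :
    x * y = w := by
  rw [eq_inv_of_mul_eq_one_left h, inv_eq_of_mul_eq_one_left hw]

/-- The linear system of the conjugacy gadget for `d b d = c`: the unknowns `q₁, …, q₆` are indexed
from `0`, and `f` is an auxiliary involution shared by all gadgets. -/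
def IsConjGadget (b c d f : K) (q : Fin 6 → K) : Prop :=
  d * q 0 * f = 1 ∧ b * f * q 1 = 1 ∧ q 1 * q 2 * q 3 = 1 ∧ d * q 3 * q 4 = 1 ∧
    c * q 4 * q 5 = 1 ∧ q 0 * q 2 * q 5 = 1

theorem IsConjGadget.conj_eq {b c d f : K} {q : Fin 6 → K} (h : IsConjGadget b c d f q)
    (hc : c * c = 1) (hd : d * d = 1) (hf : f * f = 1) (hq : ∀ l, q l * q l = 1) :
    d * b * d = c := by
  obtain ⟨h₁, h₂, h₃, h₄, h₅, h₆⟩ := h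
  have h_cdbf : c * d * b * f = d * f := calc
    c * d * b * f = c * d * (b * f) := mul_assoc _ _ _
    _ = c * d * (q 1 * q 2) * q 2 := by
      rw [mul_eq_of_mul_mul_eq_one (hq 1) h₂, ← mul_assoc (c * d), mul_assoc _ (q 2) (q 2), hq 2,
        mul_one]
    _ = c * (d * q 3) * q 2 := by rw [mul_eq_of_mul_mul_eq_one (hq 3) h₃, mul_assoc c]
    _ = q 5 * q 2 := by
      rw [mul_eq_of_mul_mul_eq_one (hq 4) h₄, mul_eq_of_mul_mul_eq_one (hq 5) h₅]
    _ = q 0 := by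
      rw [← mul_eq_of_mul_mul_eq_one (hq 5) h₆, mul_assoc, hq 2, mul_one]
    _ = d * f := by
      rw [← mul_eq_of_mul_mul_eq_one hf h₁, ← mul_assoc, hd, one_mul]
  have h_cdb : c * (d * b) = d := by
    rw [← mul_assoc]
    exact mul_right_cancel h_cdbf
  calc d * b * d = c * (c * (d * b)) * d := by rw [← mul_assoc c c, hc, one_mul]
    _ = c := by rw [h_cdb, mul_assoc, hd, mul_one]

/-- The values of `q₁, …, q₆` that the gadget for `d b d = c` forces once `f = z` and `q₆ = y`. -/
def conjGadgetSolution (b c d z y : K) : Fin 6 → K :=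
  ![d * z, b * z, d * z * y, d * c * y, c * y, y]

variable {b c d z y : K}

theorem isConjGadget_conjGadgetSolution (hb : b * b = 1) (hc : c * c = 1) (hd : d * d = 1)
    (hz : z * z = 1) (hy : y * y = 1) (hzb : Commute z b) (hzd : Commute z d)
    (hyc : Commute y c) (hyd : y * d = d * b * c * y) :
    IsConjGadget b c d z (conjGadgetSolution b c d z y) := by
  have hcy : c * y * (c * y) = 1 := mul_mul_self_eq_one_of_commute hc hy hyc.symm
  refine ⟨?_, ?_, ?_, ?_, ?_, ?_⟩
  · change d * (d * z) * z = 1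
    rw [← mul_assoc, hd, one_mul, hz]
  · change b * z * (b * z) = 1
    exact mul_mul_self_eq_one_of_commute hb hz hzb.symm
  · change b * z * (d * z * y) * (d * c * y) = 1
    calc b * z * (d * z * y) * (d * c * y)
        = b * (z * d) * z * (y * d) * (c * y) := by simp only [mul_assoc]
      _ = b * d * (z * z) * (d * b * c * y) * (c * y) := by
        rw [hzd.eq, hyd]; simp only [mul_assoc]
      _ = b * (d * d) * b * (c * y * (c * y)) := by rw [hz, mul_one]; simp only [mul_assoc]
      _ = 1 := by rw [hd, hcy, mul_one, mul_one, hb]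
  · change d * (d * c * y) * (c * y) = 1
    calc d * (d * c * y) * (c * y) = d * d * (c * y * (c * y)) := by simp only [mul_assoc]
      _ = 1 := by rw [hd, hcy, one_mul]
  · change c * (c * y) * y = 1
    rw [← mul_assoc, hc, one_mul, hy]
  · change d * z * (d * z * y) * y = 1
    rw [← mul_assoc, mul_mul_self_eq_one_of_commute hd hz hzd.symm, one_mul, hy]

theorem conjGadgetSolution_mul_self (hb : b * b = 1) (hc : c * c = 1) (hd : d * d = 1)
    (hz : z * z = 1) (hy : y * y = 1) (hdb : d * b * d = c) (hzb : Commute z b)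
    (hzd : Commute z d) (hyc : Commute y c) (hydz : Commute y (d * z))
    (hyd : y * d = d * b * c * y) (l : Fin 6) :
    conjGadgetSolution b c d z y l * conjGadgetSolution b c d z y l = 1 := by
  have hdz : d * z * (d * z) = 1 := mul_mul_self_eq_one_of_commute hd hz hzd.symm
  have hcy : c * y * (c * y) = 1 := mul_mul_self_eq_one_of_commute hc hy hyc.symm
  have hdc : d * c * d = b := by
    rw [← hdb]
    simp only [mul_assoc, hd, mul_one]
    rw [← mul_assoc, hd, one_mul]
  fin_cases l
  · exact hdz
  · exact mul_mul_self_eq_one_of_commute hb hz hzb.symm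
  · exact mul_mul_self_eq_one_of_commute hdz hy hydz.symm
  · change d * c * y * (d * c * y) = 1
    calc d * c * y * (d * c * y) = d * c * (y * d) * (c * y) := by simp only [mul_assoc]
      _ = d * c * d * b * (c * y * (c * y)) := by rw [hyd]; simp only [mul_assoc]
      _ = 1 := by rw [hdc, hb, hcy, one_mul]
  · exact hcy
  · exact hy

/-- The Magic Square relations on `f₀, f₁, f₂`, `g₀, g₁, g₂`, `m₀, m₁, m₂` and `J`. -/
def IsMagicSquare (f g m : Fin 3 → K) (J : K) : Prop :=
  g 0 * g 1 * g 2 = 1 ∧ m 0 * m 1 * m 2 = 1 ∧ f 0 * g 2 * m 0 = 1 ∧ f 2 * g 0 * m 1 = 1 ∧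
    f 1 * g 1 * m 2 = J

theorem isMagicSquare_of_commute {x y : K} (hx : x * x = 1) (hy : y * y = 1) (h : Commute x y) :
    IsMagicSquare ![x, x * y, y] ![y, x * y, x] (fun _ => 1) 1 := by
  refine ⟨?_, by simp only [mul_one], ?_, ?_, ?_⟩
  · change y * (x * y) * x = 1
    rw [h.eq, ← mul_assoc, hy, one_mul, hx]
  · exact (mul_one _).trans hx
  · exact (mul_one _).trans hy
  · exact (mul_one _).trans (mul_mul_self_eq_one_of_commute hx hy h)

end LinearSystems

section WreathProduct

variable {P : Type*} [Group P] (ε : P →* ℤˣ)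

/-- The diagonal embedding `p ↦ (p, p; ε p)` of `P` in its wreath product with `ℤ/2 = ℤˣ`, twisted
by a character. -/
def twistedDiagonal : P →* P ≀ᵣ ℤˣ where
  toFun p := ⟨fun _ => p, ε p⟩
  map_one' := by ext <;> simp
  map_mul' p p' := by ext <;> simp

theorem twistedDiagonal_injective : Function.Injective (twistedDiagonal ε) := fun _ _ h =>
  congrFun (congrArg RegularWreathProduct.left h) 1

variable (P) in
/-- The involution of `P ≀ ℤ/2` that exchanges the two coordinates. -/
def coordSwap : P ≀ᵣ ℤˣ := RegularWreathProduct.inl (-1)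

theorem coordSwap_mul_self : coordSwap P * coordSwap P = 1 := by
  rw [coordSwap, ← map_mul, Int.units_mul_self, map_one]

theorem commute_coordSwap_twistedDiagonal (p : P) :
    Commute (coordSwap P) (twistedDiagonal ε p) := by
  ext <;> simp [coordSwap, twistedDiagonal]

/-- The element `(1, t; 1)` of `P ≀ ℤ/2`. Conjugation by it multiplies the coordinate swap by
`t` when `t² = 1`. -/
def secondCoord (t : P) : P ≀ᵣ ℤˣ := ⟨Pi.mulSingle (-1) t, 1⟩

theorem secondCoord_one : secondCoord (1 : P) = 1 := by
  ext <;> simp [secondCoord]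

theorem secondCoord_mul_self {t : P} (ht : t * t = 1) : secondCoord t * secondCoord t = 1 := by
  ext s
  · rcases Int.units_eq_one_or s with rfl | rfl <;> simp [secondCoord, ht]
  · simp [secondCoord]

variable {ε}

theorem commute_secondCoord_twistedDiagonal {t p : P} (htp : Commute t p) (hp : ε p = 1) :
    Commute (secondCoord t) (twistedDiagonal ε p) := by
  ext s
  · rcases Int.units_eq_one_or s with rfl | rfl <;>
      simp [secondCoord, twistedDiagonal, hp, htp.eq]
  · simp [secondCoord]

theorem commute_secondCoord_twistedDiagonal_mul_coordSwap {t p : P} (htp : Commute t p)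
    (hp : ε p = -1) : Commute (secondCoord t) (twistedDiagonal ε p * coordSwap P) := by
  ext s
  · rcases Int.units_eq_one_or s with rfl | rfl <;>
      simp [secondCoord, twistedDiagonal, coordSwap, hp, htp.eq]
  · simp [secondCoord]

theorem secondCoord_mul_twistedDiagonal {t p : P} (htp : Commute t p) (ht : t * t = 1)
    (hεt : ε t = 1) (hp : ε p = -1) :
    secondCoord t * twistedDiagonal ε p = twistedDiagonal ε (p * t) * secondCoord t := by
  ext s
  · rcases Int.units_eq_one_or s with rfl | rfl <;>
      simp [secondCoord, twistedDiagonal, hp, hεt, htp.eq, mul_assoc, ht]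
  · simp [secondCoord, twistedDiagonal, hεt]

variable (ε) in
/-- Commuting involutions `b` and `c = d b d` for which the conjugacy gadget can be solved over
`P ≀ ℤ/2` with `b`, `c`, `d` embedded by `twistedDiagonal ε`. The
alternative `b = c` in `map_d` covers the junk letter `d = 1`. -/
structure IsConjTriple (b c d : P) : Prop where
  b_mul_self : b * b = 1
  c_mul_self : c * c = 1
  d_mul_self : d * d = 1
  conj_eq : d * b * d = c
  commute : Commute b c
  map_b : ε b = 1
  map_d : ε d = -1 ∨ b = c

namespace IsConjTriple

variable {b c d : P} (h : IsConjTriple ε b c d)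

include h

theorem map_c : ε c = 1 := by
  rw [← h.conj_eq, map_mul, map_mul, h.map_b, mul_one, Int.units_mul_self]

theorem mul_mul_self : b * c * (b * c) = 1 :=
  mul_mul_self_eq_one_of_commute h.b_mul_self h.c_mul_self h.commute

theorem commute_mul_c : Commute (b * c) c := h.commute.mul_left (Commute.refl c)

theorem d_mul_c : d * c = b * d := by
  rw [← h.conj_eq, ← mul_assoc, ← mul_assoc, h.d_mul_self, one_mul]

theorem d_mul_b : d * b = c * d := by
  rw [← h.conj_eq, mul_assoc, h.d_mul_self, mul_one]

theorem commute_mul_d : Commute (b * c) d := by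
  rw [commute_iff_eq, ← mul_assoc d, h.d_mul_b, mul_assoc c, h.d_mul_c, ← mul_assoc, h.commute.eq]

theorem commute_secondCoord_d_mul_swap :
    Commute (secondCoord (b * c)) (twistedDiagonal ε d * coordSwap P) := by
  obtain hd | rfl := h.map_d
  · exact commute_secondCoord_twistedDiagonal_mul_coordSwap h.commute_mul_d hd
  · rw [h.b_mul_self, secondCoord_one]
    exact Commute.one_left _

theorem secondCoord_mul_d : secondCoord (b * c) * twistedDiagonal ε d =
    twistedDiagonal ε d * twistedDiagonal ε b * twistedDiagonal ε c * secondCoord (b * c) := by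
  rw [← map_mul, ← map_mul, mul_assoc d]
  obtain hd | rfl := h.map_d
  · refine secondCoord_mul_twistedDiagonal h.commute_mul_d h.mul_mul_self ?_ hd
    rw [map_mul, h.map_b, h.map_c, one_mul]
  · rw [h.b_mul_self, secondCoord_one, mul_one, one_mul, mul_one]

end IsConjTriple

/-- The solution of the gadget for `d b d = c` in `P ≀ ℤ/2` given by `f = (1, 1; -1)` and
`q₆ = (1, bc; 1)`. -/
def wreathSolution (ε : P →* ℤˣ) (b c d : P) : Fin 6 → P ≀ᵣ ℤˣ :=
  conjGadgetSolution (twistedDiagonal ε b) (twistedDiagonal ε c) (twistedDiagonal ε d)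
    (coordSwap P) (secondCoord (b * c))

theorem twistedDiagonal_mul_self {p : P} (hp : p * p = 1) :
    twistedDiagonal ε p * twistedDiagonal ε p = 1 := by
  rw [← map_mul, hp, map_one]

theorem IsConjTriple.isConjGadget_wreathSolution {b c d : P} (h : IsConjTriple ε b c d) :
    IsConjGadget (twistedDiagonal ε b) (twistedDiagonal ε c) (twistedDiagonal ε d) (coordSwap P)
      (wreathSolution ε b c d) :=
  isConjGadget_conjGadgetSolution (twistedDiagonal_mul_self h.b_mul_self)
    (twistedDiagonal_mul_self h.c_mul_self) (twistedDiagonal_mul_self h.d_mul_self)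
    coordSwap_mul_self (secondCoord_mul_self h.mul_mul_self)
    (commute_coordSwap_twistedDiagonal ε b) (commute_coordSwap_twistedDiagonal ε d)
    (commute_secondCoord_twistedDiagonal h.commute_mul_c h.map_c) h.secondCoord_mul_d

theorem IsConjTriple.wreathSolution_mul_self {b c d : P} (h : IsConjTriple ε b c d) (l : Fin 6) :
    wreathSolution ε b c d l * wreathSolution ε b c d l = 1 :=
  conjGadgetSolution_mul_self (twistedDiagonal_mul_self h.b_mul_self)
    (twistedDiagonal_mul_self h.c_mul_self) (twistedDiagonal_mul_self h.d_mul_self)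
    coordSwap_mul_self (secondCoord_mul_self h.mul_mul_self)
    (by rw [← map_mul, ← map_mul, h.conj_eq]) (commute_coordSwap_twistedDiagonal ε b)
    (commute_coordSwap_twistedDiagonal ε d)
    (commute_secondCoord_twistedDiagonal h.commute_mul_c h.map_c)
    h.commute_secondCoord_d_mul_swap h.secondCoord_mul_d l

end WreathProduct

section Relations

open FreeGroup (of)
open PresentedGroup (mk)

variable {r : ℕ} {G : Type*} [Group G]

theorem map_letter_mul_self {α : Type*} {ψ : FreeGroup α →* G}
    (h : ∀ s, ψ (of s) * ψ (of s) = 1) {p : Prop} [Decidable p] (s : p → α) :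
    ψ (if hp : p then of (s hp) else 1) * ψ (if hp : p then of (s hp) else 1) = 1 := by
  split_ifs with hp
  · exact h (s hp)
  · rw [map_one, one_mul]

/-- The defining relations of `𝒫₁`, read as equations between the images of the generators under
a homomorphism. -/
structure IsP1Hom (ψ : FreeGroup (P1Gen r) →* G) : Prop where
  mul_self : ∀ s, ψ (of s) * ψ (of s) = 1
  b_mul_c : ∀ i ∈ Finset.Icc 1 (r + 5), ψ (bw r i) * ψ (cw r i) = ψ (aw r i)
  f_mul_d : ∀ i ∈ Finset.Icc 1 (r + 5), ψ (fw r) * ψ (dw r i) = ψ (aw r i)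
  f_conj_b : ∀ i ∈ Finset.Icc 1 (r + 5), ψ (fw r) * ψ (bw r i) * ψ (fw r) = ψ (cw r i)
  h_mul_b_mul_c : ∀ t : {t // t ∈ Cset r}, ψ (hw r t) * ψ (bw r t.1.2.1) * ψ (cw r t.1.2.2) = 1
  d_conj_b : ∀ t : {t // t ∈ Cset r},
    ψ (dw r t.1.1) * ψ (bw r t.1.2.1) * ψ (dw r t.1.1) = ψ (cw r t.1.2.2)

theorem isP1Hom_iff {ψ : FreeGroup (P1Gen r) →* G} :
    IsP1Hom ψ ↔ ∀ w ∈ P1Rels r, ψ w = 1 := by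
  change _ ↔ P1Rels r ⊆ ψ.ker
  simp only [P1Rels, Set.union_subset_iff, Set.iUnion_subset_iff, Set.insert_subset_iff,
    Set.singleton_subset_iff, Set.range_subset_iff, SetLike.mem_coe, MonoidHom.mem_ker, map_mul,
    map_inv, mul_inv_eq_one, forall_and, and_assoc]
  exact ⟨fun h => ⟨h.1, h.2, h.3, h.4, h.5, h.6⟩,
    fun ⟨h₁, h₂, h₃, h₄, h₅, h₆⟩ => ⟨h₁, h₂, h₃, h₄, h₅, h₆⟩⟩

namespace IsP1Hom

variable {ψ : FreeGroup (P1Gen r) →* G} (h : IsP1Hom ψ)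

include h

theorem aw_mul_self (i : ℕ) : ψ (aw r i) * ψ (aw r i) = 1 := map_letter_mul_self h.mul_self _

theorem bw_mul_self (i : ℕ) : ψ (bw r i) * ψ (bw r i) = 1 := map_letter_mul_self h.mul_self _

theorem cw_mul_self (i : ℕ) : ψ (cw r i) * ψ (cw r i) = 1 := map_letter_mul_self h.mul_self _

theorem dw_mul_self (i : ℕ) : ψ (dw r i) * ψ (dw r i) = 1 := map_letter_mul_self h.mul_self _

theorem commute_bw_cw {i : ℕ} (hi : i ∈ Finset.Icc 1 (r + 5)) :
    Commute (ψ (bw r i)) (ψ (cw r i)) := by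
  refine commute_of_mul_self_eq_one_s7 (h.bw_mul_self i) (h.cw_mul_self i) ?_
  rw [h.b_mul_c i hi, h.aw_mul_self]

theorem commute_bw_cw_of_mem_Cset (t : {t // t ∈ Cset r}) :
    Commute (ψ (bw r t.1.2.1)) (ψ (cw r t.1.2.2)) := by
  have h_bc : ψ (bw r t.1.2.1) * ψ (cw r t.1.2.2) = (ψ (hw r t))⁻¹ :=
    eq_inv_of_mul_eq_one_right ((mul_assoc _ _ _).symm.trans (h.h_mul_b_mul_c t))
  refine commute_of_mul_self_eq_one_s7 (h.bw_mul_self _) (h.cw_mul_self _) ?_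
  rw [h_bc, ← mul_inv_rev, inv_eq_one]
  exact h.mul_self (.h t)

end IsP1Hom

/-- The words that stand for the unknowns of the gadget for `f₀ b_i f₀ = c_i`. -/
def pGadgetWord (r i : ℕ) : Fin 6 → FreeGroup (GaGen r) :=
  Fin.cons (gf r 1) fun l : Fin 5 => gp r i (l + 1)

/-- The words that stand for the unknowns of the gadget for `d_i b_j d_i = c_k`. -/
def qGadgetWord (t : {t // t ∈ Cset r}) (l : Fin 6) : FreeGroup (GaGen r) :=
  gq r t (l + 1)

/-- The defining relations of `Γ`, read as equations between the images of the generators under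
a homomorphism. -/
structure IsGaHom (ψ : FreeGroup (GaGen r) →* G) : Prop where
  mul_self : ∀ s, ψ (of s) * ψ (of s) = 1
  J_mul_mul : ∀ s ≠ .J, ψ (gJ r * of s * gJ r * of s) = 1
  b_mul_c : ∀ i ∈ Finset.Icc 1 (r + 5), ψ (gb r i) * ψ (gc r i) = ψ (ga r i)
  f_mul_d : ∀ i ∈ Finset.Icc 1 (r + 5), ψ (gf r 0) * ψ (gd r i) = ψ (ga r i)
  pGadget : ∀ i ∈ Finset.Icc 1 (r + 5),
    IsConjGadget (ψ (gb r i)) (ψ (gc r i)) (ψ (gf r 0)) (ψ (gf r 2)) (ψ ∘ pGadgetWord r i)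
  h_mul_b_mul_c : ∀ t : {t // t ∈ Cset r}, ψ (gh r t) * ψ (gb r t.1.2.1) * ψ (gc r t.1.2.2) = 1
  qGadget : ∀ t : {t // t ∈ Cset r}, IsConjGadget (ψ (gb r t.1.2.1)) (ψ (gc r t.1.2.2))
    (ψ (gd r t.1.1)) (ψ (gf r 2)) (ψ ∘ qGadgetWord t)
  magicSquare : IsMagicSquare (fun l => ψ (gf r l)) (fun l => ψ (gg r l)) (fun l => ψ (gm r l))
    (ψ (gJ r))

theorem isGaHom_iff {ψ : FreeGroup (GaGen r) →* G} :
    IsGaHom ψ ↔ ∀ w ∈ GaRels r, ψ w = 1 := by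
  change _ ↔ GaRels r ⊆ ψ.ker
  simp only [GaRels, GaRelsLin, Set.union_subset_iff, Set.iUnion_subset_iff, Set.image_subset_iff,
    Set.insert_subset_iff, Set.singleton_subset_iff, Set.range_subset_iff, SetLike.mem_coe,
    MonoidHom.mem_ker, map_mul, map_inv, mul_inv_eq_one]
  refine ⟨fun h => ⟨⟨h.mul_self, fun s hs => h.J_mul_mul s hs⟩,
      ⟨fun i hi => ?_, fun t => ?_⟩, h.magicSquare⟩,
    fun ⟨⟨h_sq, h_J⟩, ⟨h_index, h_triple⟩, h_magic⟩ => ?_⟩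
  · exact ⟨h.b_mul_c i hi, h.f_mul_d i hi, h.pGadget i hi⟩
  · exact ⟨h.h_mul_b_mul_c t, h.qGadget t⟩
  · exact ⟨h_sq, fun s hs => h_J hs, fun i hi => (h_index i hi).1, fun i hi => (h_index i hi).2.1,
      fun i hi => (h_index i hi).2.2, fun t => (h_triple t).1, fun t => (h_triple t).2, h_magic⟩

variable (r) in
theorem isP1Hom_mk : IsP1Hom (mk (P1Rels r)) :=
  isP1Hom_iff.2 fun _ => PresentedGroup.one_of_mem

variable (r) in
theorem isGaHom_mk : IsGaHom (mk (GaRels r)) :=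
  isGaHom_iff.2 fun _ => PresentedGroup.one_of_mem

/-- The generator of `Γ` with the same name as a given generator of `𝒫₁`. -/
def P1Gen.toGaGen : P1Gen r → GaGen r
  | .a i => .a i
  | .b i => .b i
  | .c i => .c i
  | .d i => .d i
  | .f0 => .f 0
  | .h t => .h t

/-- The homomorphism of free groups that sends each letter of `𝒫₁` to the same-named letter
of `Γ`. -/
def letterMap (r : ℕ) : FreeGroup (P1Gen r) →* FreeGroup (GaGen r) :=
  FreeGroup.map P1Gen.toGaGen

theorem letterMap_aw (i : ℕ) : letterMap r (aw r i) = ga r i := by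
  unfold aw ga; split_ifs <;> rfl

theorem letterMap_bw (i : ℕ) : letterMap r (bw r i) = gb r i := by
  unfold bw gb; split_ifs <;> rfl

theorem letterMap_cw (i : ℕ) : letterMap r (cw r i) = gc r i := by
  unfold cw gc; split_ifs <;> rfl

theorem letterMap_dw (i : ℕ) : letterMap r (dw r i) = gd r i := by
  unfold dw gd; split_ifs <;> rfl

theorem letterMap_fw : letterMap r (fw r) = gf r 0 := rfl

theorem letterMap_hw (t : {t // t ∈ Cset r}) : letterMap r (hw r t) = gh r t := rfl

namespace IsGaHom

variable {ψ : FreeGroup (GaGen r) →* G} (h : IsGaHom ψ)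

include h

theorem gc_mul_self (i : ℕ) : ψ (gc r i) * ψ (gc r i) = 1 := map_letter_mul_self h.mul_self _

theorem gd_mul_self (i : ℕ) : ψ (gd r i) * ψ (gd r i) = 1 := map_letter_mul_self h.mul_self _

theorem gf_mul_self (l : ℕ) : ψ (gf r l) * ψ (gf r l) = 1 := map_letter_mul_self h.mul_self _

theorem gp_mul_self (i l : ℕ) : ψ (gp r i l) * ψ (gp r i l) = 1 := map_letter_mul_self h.mul_self _

theorem gq_mul_self (t : {t // t ∈ Cset r}) (l : ℕ) : ψ (gq r t l) * ψ (gq r t l) = 1 :=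
  map_letter_mul_self h.mul_self _

theorem pGadgetWord_mul_self (i : ℕ) (l : Fin 6) :
    (ψ ∘ pGadgetWord r i) l * (ψ ∘ pGadgetWord r i) l = 1 :=
  Fin.cases (h.gf_mul_self 1) (fun l => h.gp_mul_self i (l + 1)) l

theorem isP1Hom_comp_letterMap : IsP1Hom (ψ.comp (letterMap r)) := by
  constructor <;>
    simp only [MonoidHom.comp_apply, letterMap_aw, letterMap_bw, letterMap_cw, letterMap_dw,
      letterMap_fw, letterMap_hw]
  · exact fun s => h.mul_self s.toGaGen
  · exact h.b_mul_c
  · exact h.f_mul_d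
  · exact fun i hi => (h.pGadget i hi).conj_eq (h.gc_mul_self i) (h.gf_mul_self 0)
      (h.gf_mul_self 2) (h.pGadgetWord_mul_self i)
  · exact h.h_mul_b_mul_c
  · exact fun t => (h.qGadget t).conj_eq (h.gc_mul_self _) (h.gd_mul_self _)
      (h.gf_mul_self 2) fun l => h.gq_mul_self t (l + 1)

end IsGaHom

end Relations

section Embedding

open FreeGroup (of)
open PresentedGroup (mk)

variable {r : ℕ}

theorem lift_toGaGen : FreeGroup.lift (fun s => (PresentedGroup.of s.toGaGen : Ga r)) =
    (mk (GaRels r)).comp (letterMap r) :=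
  FreeGroup.ext_hom _ _ fun _ => FreeGroup.lift_apply_of

variable (r) in
/-- The homomorphism `𝒫₁ → Γ` that sends each generator to the same-named generator. -/
def p1ToGa : P1 r →* Ga r :=
  PresentedGroup.toGroup (f := fun s => PresentedGroup.of s.toGaGen) <| by
    rw [lift_toGaGen]
    exact isP1Hom_iff.1 (isGaHom_mk r).isP1Hom_comp_letterMap

theorem p1ToGa_mk (w : FreeGroup (P1Gen r)) :
    p1ToGa r (mk (P1Rels r) w) = mk (GaRels r) (letterMap r w) :=
  DFunLike.congr_fun lift_toGaGen w

/-- The sign of each generator of `𝒫₁` under the parity character. -/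
def P1Gen.sign : P1Gen r → ℤˣ
  | .d _ => -1
  | .f0 => -1
  | _ => 1

theorem lift_sign_bw (i : ℕ) : FreeGroup.lift P1Gen.sign (bw r i) = 1 := by
  unfold bw; split_ifs <;> simp [P1Gen.sign]

theorem lift_sign_cw (i : ℕ) : FreeGroup.lift P1Gen.sign (cw r i) = 1 := by
  unfold cw; split_ifs <;> simp [P1Gen.sign]

theorem isP1Hom_lift_sign : IsP1Hom (FreeGroup.lift (P1Gen.sign (r := r))) := by
  have ha (i : ℕ) : FreeGroup.lift P1Gen.sign (aw r i) = 1 := by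
    unfold aw; split_ifs <;> simp [P1Gen.sign]
  have hd {i : ℕ} (hi : i ∈ Finset.Icc 1 (r + 5)) : FreeGroup.lift P1Gen.sign (dw r i) = -1 := by
    rw [dw, dif_pos (Finset.mem_Icc.1 hi), FreeGroup.lift_apply_of, P1Gen.sign]
  have hf : FreeGroup.lift P1Gen.sign (fw r) = -1 := by simp [fw, P1Gen.sign]
  have hh (t : {t // t ∈ Cset r}) : FreeGroup.lift P1Gen.sign (hw r t) = 1 := by
    simp [hw, P1Gen.sign]
  refine ⟨fun s => Int.units_mul_self _, fun i _ => ?_, fun i hi => ?_, fun i _ => ?_,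
    fun t => ?_, fun t => ?_⟩
  · rw [ha, lift_sign_bw, lift_sign_cw, one_mul]
  · rw [hf, hd hi, ha, Int.units_mul_self]
  · rw [hf, lift_sign_bw, lift_sign_cw, mul_one, Int.units_mul_self]
  · rw [hh, lift_sign_bw, lift_sign_cw, one_mul, one_mul]
  · rw [lift_sign_bw, lift_sign_cw, mul_one, Int.units_mul_self]

variable (r) in
/-- The character of `𝒫₁` that is `-1` on `f₀` and on each `d_i` and `1` on the other
generators. -/
def parity : P1 r →* ℤˣ :=
  PresentedGroup.toGroup (isP1Hom_iff.1 isP1Hom_lift_sign)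

theorem parity_bw (i : ℕ) : parity r (mk (P1Rels r) (bw r i)) = 1 := lift_sign_bw i

theorem parity_fw : parity r (mk (P1Rels r) (fw r)) = -1 :=
  PresentedGroup.toGroup.of (isP1Hom_iff.1 isP1Hom_lift_sign)

theorem parity_dw_or_mk_dw (i : ℕ) :
    parity r (mk (P1Rels r) (dw r i)) = -1 ∨ mk (P1Rels r) (dw r i) = 1 := by
  unfold dw
  split_ifs
  · exact Or.inl (PresentedGroup.toGroup.of (isP1Hom_iff.1 isP1Hom_lift_sign))
  · exact Or.inr (map_one _)

theorem isConjTriple_mk {i : ℕ} (hi : i ∈ Finset.Icc 1 (r + 5)) :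
    IsConjTriple (parity r) (mk (P1Rels r) (bw r i)) (mk (P1Rels r) (cw r i))
      (mk (P1Rels r) (fw r)) :=
  have h := isP1Hom_mk r
  ⟨h.bw_mul_self i, h.cw_mul_self i, h.mul_self .f0, h.f_conj_b i hi, h.commute_bw_cw hi,
    parity_bw i, Or.inl parity_fw⟩

theorem isConjTriple_mk_of_mem_Cset (t : {t // t ∈ Cset r}) :
    IsConjTriple (parity r) (mk (P1Rels r) (bw r t.1.2.1)) (mk (P1Rels r) (cw r t.1.2.2))
      (mk (P1Rels r) (dw r t.1.1)) := by
  have h := isP1Hom_mk r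
  refine ⟨h.bw_mul_self _, h.cw_mul_self _, h.dw_mul_self _, h.d_conj_b t,
    h.commute_bw_cw_of_mem_Cset t, parity_bw _, ?_⟩
  refine (parity_dw_or_mk_dw t.1.1).imp_right fun h_one => ?_
  have h_conj := h.d_conj_b t
  rwa [h_one, one_mul, mul_one] at h_conj

variable (r) in
/-- The images of the generators of `Γ` under an extension of the twisted diagonal embedding of
`𝒫₁`. -/
def gaGenImage : GaGen r → P1 r ≀ᵣ ℤˣ
  | .a i => twistedDiagonal (parity r) (.of (.a i))
  | .b i => twistedDiagonal (parity r) (.of (.b i))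
  | .c i => twistedDiagonal (parity r) (.of (.c i))
  | .d i => twistedDiagonal (parity r) (.of (.d i))
  | .p i l => wreathSolution (parity r) (mk (P1Rels r) (bw r (i + 1)))
      (mk (P1Rels r) (cw r (i + 1))) (mk (P1Rels r) (fw r)) l.succ
  | .f l => ![twistedDiagonal (parity r) (.of .f0),
      twistedDiagonal (parity r) (.of .f0) * coordSwap (P1 r), coordSwap (P1 r)] l
  | .g l => ![coordSwap (P1 r), twistedDiagonal (parity r) (.of .f0) * coordSwap (P1 r),
      twistedDiagonal (parity r) (.of .f0)] l
  | .m _ => 1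
  | .h t => twistedDiagonal (parity r) (.of (.h t))
  | .q t l => wreathSolution (parity r) (mk (P1Rels r) (bw r t.1.2.1))
      (mk (P1Rels r) (cw r t.1.2.2)) (mk (P1Rels r) (dw r t.1.1)) l
  | .J => 1

variable (r) in
/-- The homomorphism on words in the generators of `Γ` given by `gaGenImage`. -/
def gaWordImage : FreeGroup (GaGen r) →* P1 r ≀ᵣ ℤˣ := FreeGroup.lift (gaGenImage r)

theorem gaWordImage_letterMap (w : FreeGroup (P1Gen r)) :
    gaWordImage r (letterMap r w) = twistedDiagonal (parity r) (mk (P1Rels r) w) := by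
  refine DFunLike.congr_fun (f := (gaWordImage r).comp (letterMap r))
    (g := (twistedDiagonal (parity r)).comp (mk (P1Rels r))) (FreeGroup.ext_hom _ _ fun s => ?_) w
  cases s <;> exact FreeGroup.lift_apply_of

theorem twistedDiagonal_of_mul_self (s : P1Gen r) :
    twistedDiagonal (parity r) (.of s) * twistedDiagonal (parity r) (.of s) = 1 :=
  twistedDiagonal_mul_self ((isP1Hom_mk r).mul_self s)

theorem twistedDiagonal_f0_mul_coordSwap_mul_self :
    twistedDiagonal (parity r) (.of .f0) * coordSwap (P1 r) *
      (twistedDiagonal (parity r) (.of .f0) * coordSwap (P1 r)) = 1 :=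
  mul_mul_self_eq_one_of_commute (twistedDiagonal_of_mul_self .f0) coordSwap_mul_self
    (commute_coordSwap_twistedDiagonal (parity r) (.of .f0)).symm

theorem gaGenImage_mul_self (s : GaGen r) : gaGenImage r s * gaGenImage r s = 1 := by
  have h_sq (s : P1Gen r) := twistedDiagonal_of_mul_self s
  have h_f₁ := twistedDiagonal_f0_mul_coordSwap_mul_self (r := r)
  rcases s with i | i | i | i | ⟨i, l⟩ | l | l | _ | t | ⟨t, l⟩ | _
  · exact h_sq (.a i)
  · exact h_sq (.b i)
  · exact h_sq (.c i)
  · exact h_sq (.d i)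
  · exact (isConjTriple_mk (Finset.mem_Icc.2 ⟨by omega, by omega⟩)).wreathSolution_mul_self l.succ
  · fin_cases l
    exacts [h_sq .f0, h_f₁, coordSwap_mul_self]
  · fin_cases l
    exacts [coordSwap_mul_self, h_f₁, h_sq .f0]
  · exact one_mul 1
  · exact h_sq (.h t)
  · exact (isConjTriple_mk_of_mem_Cset t).wreathSolution_mul_self l
  · exact one_mul 1

theorem gaWordImage_pGadgetWord {i : ℕ} (hi : i ∈ Finset.Icc 1 (r + 5)) :
    gaWordImage r ∘ pGadgetWord r i = wreathSolution (parity r) (mk (P1Rels r) (bw r i))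
      (mk (P1Rels r) (cw r i)) (mk (P1Rels r) (fw r)) := by
  obtain ⟨n, rfl⟩ := Nat.exists_eq_add_of_le' (Finset.mem_Icc.1 hi).1
  have h_gp (l : Fin 5) : gp r (n + 1) (l + 1) =
      of (.p ⟨n, Nat.lt_of_succ_le (Finset.mem_Icc.1 hi).2⟩ l) := by
    simp [gp, Nat.le_of_succ_le_succ (Finset.mem_Icc.1 hi).2, Nat.succ_le_of_lt l.2]
  funext l
  refine Fin.cases FreeGroup.lift_apply_of (fun l => ?_) l
  rw [Function.comp_apply, pGadgetWord, Fin.cons_succ, h_gp]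
  exact FreeGroup.lift_apply_of

theorem gaWordImage_qGadgetWord (t : {t // t ∈ Cset r}) :
    gaWordImage r ∘ qGadgetWord t = wreathSolution (parity r) (mk (P1Rels r) (bw r t.1.2.1))
      (mk (P1Rels r) (cw r t.1.2.2)) (mk (P1Rels r) (dw r t.1.1)) := by
  funext l
  have h_gq : gq r t (l + 1) = of (.q t l) := by simp [gq, Nat.succ_le_of_lt l.2]
  rw [Function.comp_apply, qGadgetWord, h_gq]
  exact FreeGroup.lift_apply_of

theorem isP1Hom_gaWordImage_comp_letterMap :
    IsP1Hom ((gaWordImage r).comp (letterMap r)) :=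
  isP1Hom_iff.2 fun w hw => by
    rw [MonoidHom.comp_apply, gaWordImage_letterMap, PresentedGroup.one_of_mem hw, map_one]

theorem isMagicSquare_gaWordImage :
    IsMagicSquare (fun l => gaWordImage r (gf r l)) (fun l => gaWordImage r (gg r l))
      (fun l => gaWordImage r (gm r l)) (gaWordImage r (gJ r)) := by
  have h_f (l : Fin 3) : gaWordImage r (gf r l) = gaGenImage r (.f l) := by
    fin_cases l <;> exact FreeGroup.lift_apply_of
  have h_g (l : Fin 3) : gaWordImage r (gg r l) = gaGenImage r (.g l) := by
    fin_cases l <;> exact FreeGroup.lift_apply_of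
  have h_m (l : Fin 3) : gaWordImage r (gm r l) = gaGenImage r (.m l) := by
    fin_cases l <;> exact FreeGroup.lift_apply_of
  have h_J : gaWordImage r (gJ r) = 1 := FreeGroup.lift_apply_of
  simp only [h_f, h_g, h_m, h_J]
  exact isMagicSquare_of_commute (twistedDiagonal_of_mul_self .f0) coordSwap_mul_self
    (commute_coordSwap_twistedDiagonal (parity r) (.of .f0)).symm

theorem isGaHom_gaWordImage : IsGaHom (gaWordImage r) := by
  have h := isP1Hom_gaWordImage_comp_letterMap (r := r)
  have h_b (i : ℕ) := gaWordImage_letterMap (bw r i)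
  have h_c (i : ℕ) := gaWordImage_letterMap (cw r i)
  have h_d (i : ℕ) := gaWordImage_letterMap (dw r i)
  have h_J : gaWordImage r (gJ r) = 1 := FreeGroup.lift_apply_of
  have h_f₀ := gaWordImage_letterMap (fw r)
  have h_f₂ : gaWordImage r (gf r 2) = coordSwap (P1 r) := FreeGroup.lift_apply_of
  have h_mul_self (s : GaGen r) : gaWordImage r (of s) * gaWordImage r (of s) = 1 := by
    rw [gaWordImage, FreeGroup.lift_apply_of, gaGenImage_mul_self]
  simp only [letterMap_bw, letterMap_cw, letterMap_dw, letterMap_fw] at h_b h_c h_d h_f₀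
  refine ⟨h_mul_self, fun s _ => ?_, fun i hi => ?_, fun i hi => ?_, fun i hi => ?_, fun t => ?_,
    fun t => ?_, isMagicSquare_gaWordImage⟩
  · rw [map_mul, map_mul, map_mul, h_J, one_mul, mul_one, h_mul_self]
  · simpa only [MonoidHom.comp_apply, letterMap_aw, letterMap_bw, letterMap_cw] using h.b_mul_c i hi
  · simpa only [MonoidHom.comp_apply, letterMap_aw, letterMap_fw, letterMap_dw] using h.f_mul_d i hi
  · rw [gaWordImage_pGadgetWord hi, h_b, h_c, h_f₀, h_f₂]
    exact (isConjTriple_mk hi).isConjGadget_wreathSolution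
  · simpa only [MonoidHom.comp_apply, letterMap_hw, letterMap_bw, letterMap_cw]
      using h.h_mul_b_mul_c t
  · rw [gaWordImage_qGadgetWord, h_b, h_c, h_d, h_f₂]
    exact (isConjTriple_mk_of_mem_Cset t).isConjGadget_wreathSolution

theorem p1ToGa_injective : Function.Injective (p1ToGa r) := by
  let θ : Ga r →* P1 r ≀ᵣ ℤˣ := PresentedGroup.toGroup (isGaHom_iff.1 isGaHom_gaWordImage)
  have h_comp (x : P1 r) : θ (p1ToGa r x) = twistedDiagonal (parity r) x := by
    obtain ⟨w, rfl⟩ := PresentedGroup.mk_surjective _ x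
    rw [p1ToGa_mk, ← gaWordImage_letterMap]
    rfl
  refine Function.Injective.of_comp (f := θ) ?_
  rw [show θ ∘ p1ToGa r = twistedDiagonal (parity r) from funext h_comp]
  exact twistedDiagonal_injective (parity r)

end Embedding

/-- `𝒫₁` embeds into the solution group `Γ`: there is an injective group
homomorphism `φ : 𝒫₁ → Γ` mapping each generator of `𝒫₁` (each `a_i`, `b_i`, `c_i`,
`d_i`, `f₀`, and each `h_{jk}`) to the same-named generator of `Γ`. -/
theorem stmt_7 (r : ℕ) (hr : 2 ≤ r) :
    ∃ φ : P1 r →* Ga r, Function.Injective φ ∧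
      (∀ i ∈ Finset.Icc 1 (r + 5),
        φ (PresentedGroup.mk (P1Rels r) (aw r i)) = PresentedGroup.mk (GaRels r) (ga r i) ∧
        φ (PresentedGroup.mk (P1Rels r) (bw r i)) = PresentedGroup.mk (GaRels r) (gb r i) ∧
        φ (PresentedGroup.mk (P1Rels r) (cw r i)) = PresentedGroup.mk (GaRels r) (gc r i) ∧
        φ (PresentedGroup.mk (P1Rels r) (dw r i)) = PresentedGroup.mk (GaRels r) (gd r i)) ∧
      φ (PresentedGroup.mk (P1Rels r) (fw r)) = PresentedGroup.mk (GaRels r) (gf r 0) ∧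
      ∀ t : {t : ℕ × ℕ × ℕ // t ∈ Cset r},
        φ (PresentedGroup.mk (P1Rels r) (hw r t)) = PresentedGroup.mk (GaRels r) (gh r t) := by
  refine ⟨p1ToGa r, p1ToGa_injective, fun i _ => ⟨?_, ?_, ?_, ?_⟩, ?_, fun t => ?_⟩
  · rw [p1ToGa_mk, letterMap_aw]
  · rw [p1ToGa_mk, letterMap_bw]
  · rw [p1ToGa_mk, letterMap_cw]
  · rw [p1ToGa_mk, letterMap_dw]
  · rw [p1ToGa_mk, letterMap_fw]
  · rw [p1ToGa_mk, letterMap_hw]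
end

section
/- Let d be an odd prime, r a primitive root modulo d, ω = exp(2πi/d), η = exp(2πi/(d−1)), and define the matrices A₁, A₂, A₃, A₄, O, U as in the context. Then: (i) each of A₁, A₂, A₃, A₄ is self-adjoint and satisfies A_i² = 1; (ii) A₁A₂ = O; (iii) A₃A₄ = U; (iv) A₄ x_{r^j mod d} = x_{r^{d−1−j} mod d} for every j, i.e. A₄ x_k = x_{k^{−1} mod d} for every nonzero residue k; and (v) (A₃A₄) A₂ (A₄A₃) = A₂. -/
open Matrix

/-- The nonzero residues modulo `d`, indexing the rows/columns of our matrices. -/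
abbrev NzRes (d : ℕ) := {x : ZMod d // x ≠ 0}

/-- `ω = exp(2πi/d)`. -/
noncomputable def omC (d : ℕ) : ℂ := Complex.exp (2 * Real.pi * Complex.I / d)

/-- `η = exp(2πi/(d-1))`. -/
noncomputable def etC (d : ℕ) : ℂ := Complex.exp (2 * Real.pi * Complex.I / ((d : ℂ) - 1))

/-- The standard basis index `x_j` for `j : ℕ` (junk value if `j ≡ 0 mod d`). -/
noncomputable def xv (d : ℕ) [Fact (1 < d)] (j : ℕ) : NzRes d :=
  if h : (j : ZMod d) ≠ 0 then ⟨(j : ZMod d), h⟩ else ⟨1, one_ne_zero⟩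

/-- The vector `u_k = (1/√(d-1)) ∑_{j=0}^{d-2} η^{jk} x_{r^j mod d}`. -/
noncomputable def uvec (d r : ℕ) [Fact (1 < d)] (k : ℕ) : NzRes d → ℂ :=
  fun x => (Real.sqrt ((d : ℝ) - 1) : ℂ)⁻¹ *
    ∑ j ∈ Finset.range (d - 1), etC d ^ (j * k) * (Pi.single (xv d (r ^ j)) (1 : ℂ) : NzRes d → ℂ) x

/-- `A₁ = ∑_{j=1}^{(d-1)/2} (ω^j |x_j⟩⟨x_{d-j}| + ω^{-j} |x_{d-j}⟩⟨x_j|)`. -/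
noncomputable def A1 (d : ℕ) [Fact (1 < d)] : Matrix (NzRes d) (NzRes d) ℂ :=
  ∑ j ∈ Finset.Icc 1 ((d - 1) / 2),
    (omC d ^ j • Matrix.single (xv d j) (xv d (d - j)) (1 : ℂ) +
      (omC d)⁻¹ ^ j • Matrix.single (xv d (d - j)) (xv d j) (1 : ℂ))

/-- `A₂ = ∑_{j=1}^{d-1} |x_j⟩⟨x_{d-j}|`. -/
noncomputable def A2 (d : ℕ) [Fact (1 < d)] : Matrix (NzRes d) (NzRes d) ℂ :=
  ∑ j ∈ Finset.Icc 1 (d - 1), Matrix.single (xv d j) (xv d (d - j)) (1 : ℂ)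

/-- `A₃ = |u₀⟩⟨u₀| + η^{(d-1)/2}|u_{(d-1)/2}⟩⟨u_{(d-1)/2}|
    + ∑_{k=1}^{(d-3)/2} (η^k |u_k⟩⟨u_{d-1-k}| + η^{-k} |u_{d-1-k}⟩⟨u_k|)`. -/
noncomputable def A3 (d r : ℕ) [Fact (1 < d)] : Matrix (NzRes d) (NzRes d) ℂ :=
  Matrix.vecMulVec (uvec d r 0) (star (uvec d r 0)) +
  etC d ^ ((d - 1) / 2) •
    Matrix.vecMulVec (uvec d r ((d - 1) / 2)) (star (uvec d r ((d - 1) / 2))) +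
  ∑ k ∈ Finset.Icc 1 ((d - 3) / 2),
    (etC d ^ k • Matrix.vecMulVec (uvec d r k) (star (uvec d r (d - 1 - k))) +
      (etC d)⁻¹ ^ k • Matrix.vecMulVec (uvec d r (d - 1 - k)) (star (uvec d r k)))

/-- `A₄ = |u₀⟩⟨u₀| + |u_{(d-1)/2}⟩⟨u_{(d-1)/2}|
    + ∑_{k=1}^{(d-3)/2} (|u_{d-1-k}⟩⟨u_k| + |u_k⟩⟨u_{d-1-k}|)`. -/
noncomputable def A4 (d r : ℕ) [Fact (1 < d)] : Matrix (NzRes d) (NzRes d) ℂ :=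
  Matrix.vecMulVec (uvec d r 0) (star (uvec d r 0)) +
  Matrix.vecMulVec (uvec d r ((d - 1) / 2)) (star (uvec d r ((d - 1) / 2))) +
  ∑ k ∈ Finset.Icc 1 ((d - 3) / 2),
    (Matrix.vecMulVec (uvec d r (d - 1 - k)) (star (uvec d r k)) +
      Matrix.vecMulVec (uvec d r k) (star (uvec d r (d - 1 - k))))

/-- The diagonal matrix `O x_k = ω^k x_k`. -/
noncomputable def Omat (d : ℕ) : Matrix (NzRes d) (NzRes d) ℂ :=
  Matrix.diagonal fun k : NzRes d => omC d ^ (k.1).val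

/-- The permutation matrix `U x_k = x_{k·r⁻¹ mod d}`. -/
noncomputable def Umat (d r : ℕ) : Matrix (NzRes d) (NzRes d) ℂ :=
  Matrix.of fun i k : NzRes d =>
    if (i : ZMod d) = (k : ZMod d) * (r : ZMod d)⁻¹ then (1 : ℂ) else 0

/-!
If a self-adjoint involution `a` conjugates a unitary `u` to `u⋆`, then `u a` is again a
self-adjoint involution, and `(u a) a = u`. This applies to two pairs. Write `P_σ` for the
permutation matrix of `σ`, with entries `1` at `(i, σ i)`. First, `A₂ = P_neg` conjugates the
diagonal unitary `O` to `O⋆`, and `A₁ = O A₂`. Second, since `star u_k = u_{-k}`, one has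
`A₄ = ∑ₖ u_k u_kᵀ`, which orthogonality of the characters of the cyclic group `⟨r⟩` identifies with
`P_inv`. It conjugates the permutation matrix `U` of `x ↦ x r` to `U⋆`, and `A₃ = U A₄` because
`U u_k = η^k u_k`. Finally `U` commutes with `A₂` because multiplication by `r` commutes with
negation.
-/

section Involution

/-- A self-adjoint square root of `1`; for complex matrices, an observable with eigenvalues in
`{1, -1}`. -/
def IsSelfAdjointInvolution {R : Type*} [Mul R] [One R] [Star R] (a : R) : Prop :=
  IsSelfAdjoint a ∧ a * a = 1

theorem IsSelfAdjointInvolution.mul_left {R : Type*} [Monoid R] [StarMul R] {a u : R}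
    (ha : IsSelfAdjointInvolution a) (hu : u * star u = 1) (hau : a * u * a = star u) :
    IsSelfAdjointInvolution (u * a) := by
  constructor
  · calc star (u * a) = a * (a * u * a) := by rw [star_mul, ha.1.star_eq, hau]
      _ = a * a * (u * a) := by simp only [mul_assoc]
      _ = u * a := by rw [ha.2, one_mul]
  · calc u * a * (u * a) = u * (a * u * a) := by simp only [mul_assoc]
      _ = 1 := by rw [hau, hu]

end Involution

section PermutationMatrix

variable {n R : Type*} [DecidableEq n] [Fintype n]

theorem permMatrix_eq_sum_single [NonAssocSemiring R] (σ : Equiv.Perm n) :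
    σ.permMatrix R = ∑ i, Matrix.single i (σ i) 1 := by
  ext i j
  simp [Matrix.sum_apply, Matrix.single_apply, ite_and, PEquiv.toMatrix_apply, eq_comm]

theorem permMatrix_mul_star_self [NonAssocSemiring R] [StarRing R] (σ : Equiv.Perm n) :
    σ.permMatrix R * star (σ.permMatrix R) = 1 := by
  rw [star_eq_conjTranspose, conjTranspose_permMatrix, ← permMatrix_mul, inv_mul_cancel,
    permMatrix_one]

theorem isSelfAdjointInvolution_permMatrix [NonAssocSemiring R] [StarRing R] {σ : Equiv.Perm n}
    (hσ : σ * σ = 1) : IsSelfAdjointInvolution (σ.permMatrix R) := by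
  constructor
  · rw [IsSelfAdjoint, star_eq_conjTranspose, conjTranspose_permMatrix,
      inv_eq_of_mul_eq_one_left hσ]
  · rw [← permMatrix_mul, hσ, permMatrix_one]

theorem permMatrix_mul_diagonal_mul_permMatrix_inv [NonAssocSemiring R] (σ : Equiv.Perm n)
    (w : n → R) :
    σ.permMatrix R * diagonal w * σ⁻¹.permMatrix R = diagonal (w ∘ σ) := by
  rw [PEquiv.toMatrix_toPEquiv_mul, PEquiv.mul_toMatrix_toPEquiv, Matrix.submatrix_submatrix]
  exact Matrix.submatrix_diagonal_equiv w σ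

theorem diagonal_mul_single [NonAssocSemiring R] (w : n → R) (i j : n) (c : R) :
    diagonal w * Matrix.single i j c = Matrix.single i j (w i * c) := by
  ext k l
  rw [diagonal_mul, Matrix.single_apply, Matrix.single_apply, mul_ite, mul_zero]
  exact ite_congr rfl (fun h => by rw [h.1]) fun _ => rfl

end PermutationMatrix

section ReflectedSums

variable {M : Type*} [AddCommMonoid M] (f : ℕ → M)

theorem sum_Icc_one_add_reflect {m N : ℕ} (h : m ≤ N) :
    ∑ j ∈ Finset.Icc 1 m, (f j + f (N - j)) =
      ∑ j ∈ Finset.Ico 1 (m + 1), f j + ∑ j ∈ Finset.Ico (N - m) N, f j := by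
  rw [← Finset.Ico_add_one_right_eq_Icc, Finset.sum_add_distrib,
    Finset.sum_Ico_reflect f 1 (by omega), Nat.add_sub_add_right, Nat.add_sub_cancel]

theorem sum_Icc_one_two_mul (m : ℕ) :
    ∑ j ∈ Finset.Icc 1 (2 * m), f j = ∑ j ∈ Finset.Icc 1 m, (f j + f (2 * m + 1 - j)) := by
  rw [sum_Icc_one_add_reflect f (by omega), show 2 * m + 1 - m = m + 1 by omega,
    Finset.sum_Ico_consecutive f (by omega) (by omega), Finset.Ico_add_one_right_eq_Icc]

theorem sum_range_two_mul_add_two (m : ℕ) :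
    ∑ k ∈ Finset.range (2 * m + 2), f k =
      f 0 + f (m + 1) + ∑ k ∈ Finset.Icc 1 m, (f k + f (2 * m + 2 - k)) := by
  rw [sum_Icc_one_add_reflect f (by omega), show 2 * m + 2 - m = m + 1 + 1 by omega,
    add_assoc, add_left_comm (f (m + 1)), ← Finset.sum_eq_sum_Ico_succ_bot (by omega),
    Finset.sum_Ico_consecutive f (by omega) (by omega), Finset.range_eq_Ico,
    ← Finset.sum_eq_sum_Ico_succ_bot (by omega)]

end ReflectedSums

section RootsOfUnity

theorem sum_range_primitiveRoot_pow_mul {K : Type*} [CommRing K] [IsDomain K] {ζ : K} {n : ℕ}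
    (hζ : IsPrimitiveRoot ζ n) (t : ℕ) :
    ∑ k ∈ Finset.range n, ζ ^ (t * k) = if n ∣ t then (n : K) else 0 := by
  simp_rw [pow_mul]
  split_ifs with h
  · simp [(hζ.pow_eq_one_iff_dvd t).2 h]
  · have hne : ζ ^ t - 1 ≠ 0 := sub_ne_zero.2 fun h1 => h ((hζ.pow_eq_one_iff_dvd t).1 h1)
    have hgeom := geom_sum_mul (ζ ^ t) n
    rw [pow_right_comm, hζ.pow_eq_one, one_pow, sub_self] at hgeom
    exact (mul_eq_zero.1 hgeom).resolve_right hne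

theorem star_primitiveRoot_pow {ζ : ℂ} {n : ℕ} (hζ : IsPrimitiveRoot ζ n) (hn : n ≠ 0) {a b : ℕ}
    (h : n ∣ a + b) : star (ζ ^ a) = ζ ^ b := by
  have hab : ζ ^ a * ζ ^ b = 1 := by rw [← pow_add, (hζ.pow_eq_one_iff_dvd _).2 h]
  have hnorm : ‖ζ ^ a‖ = 1 := by rw [norm_pow, hζ.norm'_eq_one hn, one_pow]
  exact (Complex.inv_eq_conj hnorm).symm.trans (inv_eq_of_mul_eq_one_right hab)

theorem inv_primitiveRoot_pow {G : Type*} [DivisionCommMonoid G] {ζ : G} {n k : ℕ}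
    (hζ : IsPrimitiveRoot ζ n) (hk : k ≤ n) : ζ⁻¹ ^ k = ζ ^ (n - k) := by
  rw [inv_pow]
  exact inv_eq_of_mul_eq_one_right (by rw [← pow_add, Nat.add_sub_cancel' hk, hζ.pow_eq_one])

theorem isPrimitiveRoot_omC {d : ℕ} (hd : d ≠ 0) : IsPrimitiveRoot (omC d) d :=
  Complex.isPrimitiveRoot_exp d hd

theorem isPrimitiveRoot_etC {d : ℕ} (hd : 1 < d) : IsPrimitiveRoot (etC d) (d - 1) := by
  simpa [etC, Nat.cast_sub hd.le] using Complex.isPrimitiveRoot_exp (d - 1) (by omega)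

end RootsOfUnity

section Residues

/-- Negation `x ↦ -x` as a permutation of the nonzero residues. -/
def NzRes.negPerm (d : ℕ) : Equiv.Perm (NzRes d) :=
  (Equiv.neg (ZMod d)).subtypePerm fun _ => neg_ne_zero

/-- Inversion `x ↦ x⁻¹` as a permutation of the nonzero residues. -/
def NzRes.invPerm (d : ℕ) [Fact d.Prime] : Equiv.Perm (NzRes d) :=
  (Equiv.inv (ZMod d)).subtypePerm fun _ => inv_eq_zero.not

/-- Multiplication `x ↦ x * c` as a permutation of the nonzero residues. -/
def NzRes.mulRightPerm {d : ℕ} [Fact d.Prime] (c : NzRes d) : Equiv.Perm (NzRes d) :=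
  (Equiv.mulRight₀ (c : ZMod d) c.2).subtypePerm fun _ => mul_ne_zero_iff_right c.2

namespace NzRes

theorem coe_negPerm_apply {d : ℕ} (x : NzRes d) : (negPerm d x : ZMod d) = -(x : ZMod d) :=
  rfl

theorem negPerm_mul_self (d : ℕ) : negPerm d * negPerm d = 1 :=
  Equiv.ext fun x => Subtype.ext (neg_neg (x : ZMod d))

variable {d : ℕ} [Fact d.Prime]

theorem coe_invPerm_apply (x : NzRes d) : (invPerm d x : ZMod d) = (x : ZMod d)⁻¹ :=
  rfl

theorem coe_mulRightPerm_apply (c x : NzRes d) : (mulRightPerm c x : ZMod d) = x * c :=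
  rfl

theorem invPerm_mul_self : invPerm d * invPerm d = 1 :=
  Equiv.ext fun x => Subtype.ext (inv_inv (x : ZMod d))

theorem invPerm_mul_mulRightPerm_mul_invPerm (c : NzRes d) :
    invPerm d * mulRightPerm c * invPerm d = (mulRightPerm c)⁻¹ := by
  refine eq_inv_of_mul_eq_one_left (Equiv.ext fun x => Subtype.ext ?_)
  have hc : (c : ZMod d) ≠ 0 := c.2
  simp only [Equiv.Perm.mul_apply, Equiv.Perm.one_apply, coe_invPerm_apply, coe_mulRightPerm_apply]
  field_simp

theorem commute_negPerm_mulRightPerm (c : NzRes d) : Commute (negPerm d) (mulRightPerm c) :=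
  Equiv.ext fun x => Subtype.ext (neg_mul (x : ZMod d) c).symm

end NzRes

variable {d : ℕ} [Fact (1 < d)]

theorem coe_xv {j : ℕ} (hj : (j : ZMod d) ≠ 0) : (xv d j : ZMod d) = j := by
  simp [xv, hj]

theorem coe_xv_of_mem_Icc {j : ℕ} (hj : j ∈ Finset.Icc 1 (d - 1)) : (xv d j : ZMod d) = j := by
  rw [Finset.mem_Icc] at hj
  refine coe_xv fun h => ?_
  exact Nat.not_dvd_of_pos_of_lt hj.1 (by omega) ((ZMod.natCast_eq_zero_iff j d).1 h)

theorem val_xv {j : ℕ} (hj : j ∈ Finset.Icc 1 (d - 1)) : (xv d j : ZMod d).val = j := by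
  rw [coe_xv_of_mem_Icc hj, ZMod.val_cast_of_lt]
  rw [Finset.mem_Icc] at hj
  omega

theorem xv_sub {j : ℕ} (hj : j ∈ Finset.Icc 1 (d - 1)) :
    xv d (d - j) = NzRes.negPerm d (xv d j) := by
  have hj' : d - j ∈ Finset.Icc 1 (d - 1) := by
    rw [Finset.mem_Icc] at hj ⊢
    omega
  refine Subtype.ext ?_
  rw [Finset.mem_Icc] at hj
  rw [NzRes.coe_negPerm_apply, coe_xv_of_mem_Icc hj', coe_xv_of_mem_Icc (Finset.mem_Icc.2 hj),
    Nat.cast_sub (by omega), ZMod.natCast_self, zero_sub]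

theorem sum_Icc_xv [NeZero d] {M : Type*} [AddCommMonoid M] (f : NzRes d → M) :
    ∑ j ∈ Finset.Icc 1 (d - 1), f (xv d j) = ∑ x, f x := by
  have val_mem (x : NzRes d) : (x : ZMod d).val ∈ Finset.Icc 1 (d - 1) := by
    have hpos := ZMod.val_pos.2 x.2
    have hlt := ZMod.val_lt (x : ZMod d)
    rw [Finset.mem_Icc]
    omega
  refine Finset.sum_nbij' (xv d) (fun x => (x : ZMod d).val) (by simp) (fun x _ => val_mem x)
    (fun j hj => val_xv hj) (fun x _ => Subtype.ext ?_) (fun _ _ => rfl)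
  rw [coe_xv_of_mem_Icc (val_mem x), ZMod.natCast_zmod_val]

end Residues

section Antidiagonal

variable {d : ℕ} [NeZero d]

theorem A2_eq_permMatrix [Fact (1 < d)] : A2 d = (NzRes.negPerm d).permMatrix ℂ := by
  rw [permMatrix_eq_sum_single, ← sum_Icc_xv, A2]
  exact Finset.sum_congr rfl fun j hj => by rw [xv_sub hj]

theorem isSelfAdjointInvolution_A2 [Fact (1 < d)] : IsSelfAdjointInvolution (A2 d) := by
  rw [A2_eq_permMatrix]
  exact isSelfAdjointInvolution_permMatrix (NzRes.negPerm_mul_self d)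

theorem Omat_mul_single_xv [Fact (1 < d)] {j : ℕ} (hj : j ∈ Finset.Icc 1 (d - 1)) (y : NzRes d) :
    Omat d * Matrix.single (xv d j) y 1 = omC d ^ j • Matrix.single (xv d j) y 1 := by
  rw [Omat, diagonal_mul_single, val_xv hj, Matrix.smul_single, smul_eq_mul]

theorem A1_eq_Omat_mul_A2 [Fact (1 < d)] (hodd : Odd d) : A1 d = Omat d * A2 d := by
  obtain ⟨m, rfl⟩ := hodd
  rw [A1, A2, Nat.add_sub_cancel, Nat.mul_div_cancel_left m two_pos, sum_Icc_one_two_mul,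
    Matrix.mul_sum]
  refine Finset.sum_congr rfl fun j hj => ?_
  rw [Finset.mem_Icc] at hj
  rw [Matrix.mul_add, Omat_mul_single_xv (Finset.mem_Icc.2 (by omega)),
    Omat_mul_single_xv (Finset.mem_Icc.2 (by omega)), Nat.sub_sub_self (by omega),
    inv_primitiveRoot_pow (isPrimitiveRoot_omC (by omega)) (by omega)]

theorem star_Omat : star (Omat d) = diagonal fun x : NzRes d => omC d ^ (-x : ZMod d).val := by
  rw [Omat, star_eq_conjTranspose, diagonal_conjTranspose]
  congr 1
  funext x
  refine star_primitiveRoot_pow (isPrimitiveRoot_omC (NeZero.ne d)) (NeZero.ne d) ?_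
  have : NeZero (x : ZMod d) := ⟨x.2⟩
  rw [ZMod.val_neg_of_ne_zero, Nat.add_sub_cancel' (ZMod.val_lt _).le]

theorem Omat_mul_star_self : Omat d * star (Omat d) = 1 := by
  rw [Omat, star_eq_conjTranspose, diagonal_conjTranspose, diagonal_mul_diagonal,
    ← diagonal_one]
  congr 1
  funext x
  have hnorm : ‖omC d ^ (x : ZMod d).val‖ = 1 := by
    rw [norm_pow, (isPrimitiveRoot_omC (NeZero.ne d)).norm'_eq_one (NeZero.ne d), one_pow]
  refine (Complex.mul_conj' _).trans ?_
  rw [hnorm, Complex.ofReal_one, one_pow]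

theorem A2_mul_Omat_mul_A2 [Fact (1 < d)] : A2 d * Omat d * A2 d = star (Omat d) := by
  have hinv := inv_eq_of_mul_eq_one_left (NzRes.negPerm_mul_self d)
  have hconj := permMatrix_mul_diagonal_mul_permMatrix_inv (NzRes.negPerm d)
    fun x : NzRes d => omC d ^ (x : ZMod d).val
  rw [hinv] at hconj
  rw [A2_eq_permMatrix, star_Omat]
  exact hconj

theorem isSelfAdjointInvolution_A1 [Fact (1 < d)] (hodd : Odd d) :
    IsSelfAdjointInvolution (A1 d) := by
  rw [A1_eq_Omat_mul_A2 hodd]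
  exact isSelfAdjointInvolution_A2.mul_left Omat_mul_star_self A2_mul_Omat_mul_A2

end Antidiagonal

section Fourier

variable {d r : ℕ} [Fact d.Prime]

theorem coe_xv_pow (hr : orderOf (r : ZMod d) = d - 1) (a : ℕ) :
    (xv d (r ^ a) : ZMod d) = (r : ZMod d) ^ a := by
  have hd := (Fact.out : d.Prime).one_lt
  have hr0 : (r : ZMod d) ≠ 0 := by
    intro h
    have hpow := pow_orderOf_eq_one (r : ZMod d)
    rw [hr, h, zero_pow (by omega)] at hpow
    exact zero_ne_one hpow
  rw [coe_xv (by simpa using pow_ne_zero a hr0), Nat.cast_pow]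

theorem exists_eq_xv_pow (hr : orderOf (r : ZMod d) = d - 1) (x : NzRes d) :
    ∃ a, x = xv d (r ^ a) := by
  have : NeZero (d - 1) := ⟨by have := (Fact.out : d.Prime).one_lt; omega⟩
  have hprim : IsPrimitiveRoot (r : ZMod d) (d - 1) := hr ▸ IsPrimitiveRoot.orderOf _
  obtain ⟨a, -, ha⟩ := hprim.eq_pow_of_pow_eq_one (ZMod.pow_card_sub_one_eq_one x.2)
  exact ⟨a, Subtype.ext (by rw [coe_xv_pow hr, ha])⟩

theorem xv_pow_inj (hr : orderOf (r : ZMod d) = d - 1) {a b : ℕ} :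
    xv d (r ^ a) = xv d (r ^ b) ↔ a ≡ b [MOD d - 1] := by
  have hd := (Fact.out : d.Prime).one_lt
  have hfin : IsOfFinOrder (r : ZMod d) := orderOf_pos_iff.1 (by omega)
  rw [Subtype.ext_iff, coe_xv_pow hr, coe_xv_pow hr, hfin.pow_eq_pow_iff_modEq, hr]

theorem uvec_xv_pow (hr : orderOf (r : ZMod d) = d - 1) (k a : ℕ) :
    uvec d r k (xv d (r ^ a)) = (Real.sqrt ((d : ℝ) - 1) : ℂ)⁻¹ * etC d ^ (a * k) := by
  have hd := (Fact.out : d.Prime).one_lt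
  have hmod : a % (d - 1) < d - 1 := Nat.mod_lt _ (by omega)
  rw [uvec, Finset.sum_eq_single (a % (d - 1))]
  · have hroot : etC d ^ (a % (d - 1)) = etC d ^ a := by
      rw [(isPrimitiveRoot_etC hd).eq_orderOf, pow_mod_orderOf]
    rw [(xv_pow_inj hr).2 (Nat.mod_modEq a (d - 1)), Pi.single_eq_same, mul_one, pow_mul, hroot,
      ← pow_mul]
  · intro j hj hne
    rw [Pi.single_eq_of_ne, mul_zero]
    intro h
    have hja := (xv_pow_inj hr).1 h
    exact hne (hja.symm.trans (Nat.mod_modEq a _).symm |>.eq_of_lt_of_lt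
      (Finset.mem_range.1 hj) hmod)
  · exact fun h => absurd (Finset.mem_range.2 hmod) h

theorem star_uvec (hr : orderOf (r : ZMod d) = d - 1) {k l : ℕ} (hkl : d - 1 ∣ k + l) :
    star (uvec d r k) = uvec d r l := by
  have hd := (Fact.out : d.Prime).one_lt
  funext x
  obtain ⟨a, rfl⟩ := exists_eq_xv_pow hr x
  rw [Pi.star_apply, uvec_xv_pow hr, uvec_xv_pow hr, star_mul',
    star_primitiveRoot_pow (b := a * l) (isPrimitiveRoot_etC hd) (by omega)
      (by rw [← mul_add]; exact hkl.mul_left a), star_inv₀]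
  simp

theorem uvec_xv_pow_mul_uvec_xv_pow (hr : orderOf (r : ZMod d) = d - 1) (k a b : ℕ) :
    uvec d r k (xv d (r ^ a)) * uvec d r k (xv d (r ^ b)) =
      ((d - 1 : ℕ) : ℂ)⁻¹ * etC d ^ ((a + b) * k) := by
  have hd := (Fact.out : d.Prime).one_lt
  have hsqrt : (Real.sqrt ((d : ℝ) - 1) : ℂ) * Real.sqrt ((d : ℝ) - 1) = ((d - 1 : ℕ) : ℂ) := by
    rw [← Complex.ofReal_mul, Real.mul_self_sqrt (by simpa using hd.le), Nat.cast_sub hd.le]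
    simp
  rw [uvec_xv_pow hr, uvec_xv_pow hr, mul_mul_mul_comm, ← mul_inv, hsqrt, ← pow_add, add_mul]

theorem A4_eq_sum_vecMulVec (hodd : Odd d) (hr : orderOf (r : ZMod d) = d - 1) :
    A4 d r = ∑ k ∈ Finset.range (d - 1), vecMulVec (uvec d r k) (uvec d r k) := by
  have hd := (Fact.out : d.Prime).one_lt
  obtain ⟨m, hn⟩ : ∃ m, d - 1 = 2 * m + 2 := by
    obtain ⟨l, hl⟩ := hodd
    exact ⟨l - 1, by omega⟩
  have hhalf : (d - 1) / 2 = m + 1 := by omega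
  have hpairs : (d - 3) / 2 = m := by omega
  rw [A4, hhalf, hpairs, hn, sum_range_two_mul_add_two, star_uvec hr (l := 0) (by simp),
    star_uvec hr (l := m + 1) ⟨1, by omega⟩]
  congr 1
  refine Finset.sum_congr rfl fun k hk => ?_
  rw [Finset.mem_Icc] at hk
  rw [star_uvec hr (k := k) (l := 2 * m + 2 - k) ⟨1, by omega⟩,
    star_uvec hr (k := 2 * m + 2 - k) (l := k) ⟨1, by omega⟩, add_comm]

theorem invPerm_xv_pow_eq_iff (hr : orderOf (r : ZMod d) = d - 1) {a b : ℕ} :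
    NzRes.invPerm d (xv d (r ^ a)) = xv d (r ^ b) ↔ d - 1 ∣ a + b := by
  rw [← hr, orderOf_dvd_iff_pow_eq_one, pow_add, ← coe_xv_pow hr a, ← coe_xv_pow hr b,
    Subtype.ext_iff, mul_eq_one_iff_inv_eq₀ (xv d (r ^ a)).2, NzRes.coe_invPerm_apply]

theorem A4_eq_permMatrix (hodd : Odd d) (hr : orderOf (r : ZMod d) = d - 1) :
    A4 d r = (NzRes.invPerm d).permMatrix ℂ := by
  have hd := (Fact.out : d.Prime).one_lt
  have hn : ((d - 1 : ℕ) : ℂ) ≠ 0 := Nat.cast_ne_zero.2 (by omega)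
  ext x y
  obtain ⟨a, rfl⟩ := exists_eq_xv_pow hr x
  obtain ⟨b, rfl⟩ := exists_eq_xv_pow hr y
  calc A4 d r (xv d (r ^ a)) (xv d (r ^ b))
      = ∑ k ∈ Finset.range (d - 1), ((d - 1 : ℕ) : ℂ)⁻¹ * etC d ^ ((a + b) * k) := by
        simp only [A4_eq_sum_vecMulVec hodd hr, Matrix.sum_apply, vecMulVec_apply,
          uvec_xv_pow_mul_uvec_xv_pow hr]
    _ = if d - 1 ∣ a + b then 1 else 0 := by
        rw [← Finset.mul_sum, sum_range_primitiveRoot_pow_mul (isPrimitiveRoot_etC hd), mul_ite,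
          inv_mul_cancel₀ hn, mul_zero]
    _ = (NzRes.invPerm d).permMatrix ℂ (xv d (r ^ a)) (xv d (r ^ b)) := by
        simp [PEquiv.toMatrix_apply, ← invPerm_xv_pow_eq_iff hr, eq_comm]

theorem isSelfAdjointInvolution_A4 (hodd : Odd d) (hr : orderOf (r : ZMod d) = d - 1) :
    IsSelfAdjointInvolution (A4 d r) := by
  rw [A4_eq_permMatrix hodd hr]
  exact isSelfAdjointInvolution_permMatrix NzRes.invPerm_mul_self

theorem A4_mulVec_single (hodd : Odd d) (hr : orderOf (r : ZMod d) = d - 1) (x : NzRes d) :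
    A4 d r *ᵥ Pi.single x 1 = Pi.single (NzRes.invPerm d x) 1 := by
  rw [A4_eq_permMatrix hodd hr, permMatrix_mulVec, Pi.single_comp_equiv, ← Equiv.Perm.inv_def,
    inv_eq_of_mul_eq_one_left NzRes.invPerm_mul_self]

theorem Umat_eq_permMatrix (hr : orderOf (r : ZMod d) = d - 1) :
    Umat d r = (NzRes.mulRightPerm (xv d r)).permMatrix ℂ := by
  have hcoe : (xv d r : ZMod d) = r := by simpa using coe_xv_pow hr 1
  have hr0 : (r : ZMod d) ≠ 0 := hcoe ▸ (xv d r).2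
  ext x y
  simp only [Umat, of_apply, PEquiv.toMatrix_apply, Equiv.toPEquiv_apply, Option.mem_some_iff,
    Subtype.ext_iff, NzRes.coe_mulRightPerm_apply, hcoe, eq_mul_inv_iff_mul_eq₀ hr0]

theorem Umat_mul_star_self (hr : orderOf (r : ZMod d) = d - 1) :
    Umat d r * star (Umat d r) = 1 := by
  rw [Umat_eq_permMatrix hr, permMatrix_mul_star_self]

theorem Umat_mulVec_uvec (hr : orderOf (r : ZMod d) = d - 1) (k : ℕ) :
    Umat d r *ᵥ uvec d r k = etC d ^ k • uvec d r k := by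
  rw [Umat_eq_permMatrix hr, permMatrix_mulVec]
  funext x
  obtain ⟨a, rfl⟩ := exists_eq_xv_pow hr x
  have hshift : NzRes.mulRightPerm (xv d r) (xv d (r ^ a)) = xv d (r ^ (a + 1)) := by
    refine Subtype.ext ?_
    have hcoe : (xv d r : ZMod d) = r := by simpa using coe_xv_pow hr 1
    rw [NzRes.coe_mulRightPerm_apply, coe_xv_pow hr, coe_xv_pow hr, hcoe, pow_succ]
  rw [Function.comp_apply, hshift, uvec_xv_pow hr, Pi.smul_apply, uvec_xv_pow hr, smul_eq_mul,
    add_one_mul, pow_add]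
  ring

theorem Umat_mul_vecMulVec (hr : orderOf (r : ZMod d) = d - 1) (k : ℕ) (v : NzRes d → ℂ) :
    Umat d r * vecMulVec (uvec d r k) v = etC d ^ k • vecMulVec (uvec d r k) v := by
  rw [mul_vecMulVec, Umat_mulVec_uvec hr, smul_vecMulVec]

theorem A3_eq_Umat_mul_A4 (hr : orderOf (r : ZMod d) = d - 1) :
    A3 d r = Umat d r * A4 d r := by
  have hd := (Fact.out : d.Prime).one_lt
  rw [A3, A4]
  simp only [Matrix.mul_add, Matrix.mul_sum, Umat_mul_vecMulVec hr, pow_zero, one_smul]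
  congr 1
  refine Finset.sum_congr rfl fun k hk => ?_
  rw [Finset.mem_Icc] at hk
  rw [inv_primitiveRoot_pow (isPrimitiveRoot_etC hd) (by omega), add_comm]

theorem A4_mul_Umat_mul_A4 (hodd : Odd d) (hr : orderOf (r : ZMod d) = d - 1) :
    A4 d r * Umat d r * A4 d r = star (Umat d r) := by
  rw [A4_eq_permMatrix hodd hr, Umat_eq_permMatrix hr, ← permMatrix_mul, ← permMatrix_mul,
    star_eq_conjTranspose, conjTranspose_permMatrix, ← mul_assoc,
    NzRes.invPerm_mul_mulRightPerm_mul_invPerm]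

theorem isSelfAdjointInvolution_A3 (hodd : Odd d) (hr : orderOf (r : ZMod d) = d - 1) :
    IsSelfAdjointInvolution (A3 d r) := by
  rw [A3_eq_Umat_mul_A4 hr]
  exact (isSelfAdjointInvolution_A4 hodd hr).mul_left (Umat_mul_star_self hr)
    (A4_mul_Umat_mul_A4 hodd hr)

theorem commute_Umat_A2 (hr : orderOf (r : ZMod d) = d - 1) : Commute (Umat d r) (A2 d) := by
  rw [Umat_eq_permMatrix hr, A2_eq_permMatrix, Commute, SemiconjBy, ← permMatrix_mul,
    ← permMatrix_mul, NzRes.commute_negPerm_mulRightPerm]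

end Fourier

theorem stmt_10 (d r : ℕ) [Fact d.Prime] (hodd : Odd d)
    (hr : orderOf (r : ZMod d) = d - 1) :
    ((A1 d).IsHermitian ∧ A1 d * A1 d = 1) ∧
    ((A2 d).IsHermitian ∧ A2 d * A2 d = 1) ∧
    ((A3 d r).IsHermitian ∧ A3 d r * A3 d r = 1) ∧
    ((A4 d r).IsHermitian ∧ A4 d r * A4 d r = 1) ∧
    A1 d * A2 d = Omat d ∧
    A3 d r * A4 d r = Umat d r ∧
    (∀ j : ℕ, j ≤ d - 1 →
      (A4 d r).mulVec (Pi.single (xv d (r ^ j)) 1) =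
        Pi.single (xv d (r ^ (d - 1 - j))) 1) ∧
    (∀ k : NzRes d, (A4 d r).mulVec (Pi.single k 1) =
        Pi.single (⟨(k : ZMod d)⁻¹, inv_ne_zero k.2⟩ : NzRes d) 1) ∧
    (A3 d r * A4 d r) * A2 d * (A4 d r * A3 d r) = A2 d := by
  have h2 := isSelfAdjointInvolution_A2 (d := d)
  have h3 := isSelfAdjointInvolution_A3 hodd hr
  have h4 := isSelfAdjointInvolution_A4 hodd hr
  have h12 : A1 d * A2 d = Omat d := by
    rw [A1_eq_Omat_mul_A2 hodd, Matrix.mul_assoc, h2.2, Matrix.mul_one]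
  have h34 : A3 d r * A4 d r = Umat d r := by
    rw [A3_eq_Umat_mul_A4 hr, Matrix.mul_assoc, h4.2, Matrix.mul_one]
  have h43 : A4 d r * A3 d r = star (Umat d r) := by
    rw [← h34, star_mul, h3.1.star_eq, h4.1.star_eq]
  refine ⟨isSelfAdjointInvolution_A1 hodd, h2, h3, h4, h12, h34, fun j hj => ?_,
    A4_mulVec_single hodd hr, ?_⟩
  · have hinv : NzRes.invPerm d (xv d (r ^ j)) = xv d (r ^ (d - 1 - j)) :=
      (invPerm_xv_pow_eq_iff hr).2 ⟨1, by omega⟩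
    rw [A4_mulVec_single hodd hr, hinv]
  · rw [h34, h43, (commute_Umat_A2 hr).eq, Matrix.mul_assoc, Umat_mul_star_self hr,
      Matrix.mul_one]
end
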